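/- arXiv:1910.01729 — 10 statements merged into one kernel-verified Lean document; each statement's English description precedes it below -/
import Mathlib

section
/- Let C1 and C2 be two vertex-disjoint alternating cycles in a 2-edge-colored graph G. If there is a good pair of edges between C1 and C2, then G contains an alternating cycle whose vertex set is exactly V(C1) ∪ V(C2). -/
/-- An alternating cycle of length `N` in the 2-edge-colored graph `(G, c)`
(colors: `true` = red, `false` = blue), given by an injective map
`x : ZMod N → V` such that consecutive images are adjacent in `G` and any two
consecutive edges of the cycle have different colors. -/
def IsAltCycle {V : Type*} (G : SimpleGraph V) (c : Sym2 V → Bool) {N : ℕ}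
    (x : ZMod N → V) : Prop :=
  Function.Injective x ∧ (∀ i, G.Adj (x i) (x (i + 1))) ∧
    ∀ i, c s(x i, x (i + 1)) ≠ c s(x (i + 1), x (i + 2))

/-- There is a good pair of edges between the two vertex-disjoint alternating
cycles `x` and `y`: a pair of edges `x s - y t`, `x s' - y t'` with
`s' ∈ {s-1, s+1}`, `t' ∈ {t-1, t+1}` such that `x s, x s', y t', y t, x s`
is a monochromatic 4-cycle of `G`. -/
def HasGoodPair {V : Type*} (G : SimpleGraph V) (c : Sym2 V → Bool) {N M : ℕ}
    (x : ZMod N → V) (y : ZMod M → V) : Prop :=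
  ∃ (s s' : ZMod N) (t t' : ZMod M),
    (s' = s - 1 ∨ s' = s + 1) ∧ (t' = t - 1 ∨ t' = t + 1) ∧
    G.Adj (x s) (y t) ∧ G.Adj (x s') (y t') ∧
    c s(x s, x s') = c s(x s, y t) ∧
    c s(x s', y t') = c s(x s, y t) ∧
    c s(y t', y t) = c s(x s, y t)

theorem IsAltCycle.shift {V : Type*} {G : SimpleGraph V} {c : Sym2 V → Bool} {N : ℕ}
    {x : ZMod N → V} (h : IsAltCycle G c x) (a : ZMod N) :
    IsAltCycle G c (fun i => x (a + i)) := by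
  obtain ⟨h1, h2, h3⟩ := h
  refine ⟨fun i j hij => add_left_cancel (h1 hij), fun i => ?_, fun i => ?_⟩
  · have := h2 (a + i)
    rwa [add_assoc] at this
  · have := h3 (a + i)
    rwa [add_assoc, add_assoc] at this

theorem IsAltCycle.reflect {V : Type*} {G : SimpleGraph V} {c : Sym2 V → Bool} {N : ℕ}
    {x : ZMod N → V} (h : IsAltCycle G c x) :
    IsAltCycle G c (fun i => x (-i)) := by
  obtain ⟨h1, h2, h3⟩ := h
  refine ⟨fun i j hij => neg_injective (h1 hij), fun i => ?_, fun i => ?_⟩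
  · have := h2 (-(i + 1))
    rw [show -(i + 1) + 1 = -i by ring] at this
    exact this.symm
  · have := h3 (-(i + 2))
    rw [show -(i + 2) + 1 = -(i + 1) by ring, show -(i + 2) + 2 = -i by ring] at this
    rw [Sym2.eq_swap (a := x (-(i + 2))), Sym2.eq_swap (a := x (-(i + 1))) (b := x (-i))] at this
    exact this.symm

/-- Re-parametrize so that `s'` is at `0` and `s` is at `-1`. -/
theorem IsAltCycle.normalize {V : Type*} {G : SimpleGraph V} {c : Sym2 V → Bool} {N : ℕ}
    {x : ZMod N → V} (h : IsAltCycle G c x) (s s' : ZMod N) (hs : s' = s - 1 ∨ s' = s + 1) :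
    ∃ X : ZMod N → V, IsAltCycle G c X ∧ X 0 = x s' ∧ X (-1) = x s ∧
      Set.range X = Set.range x := by
  rcases hs with rfl | rfl
  · refine ⟨fun i => x ((s - 1) + -i), (h.shift (s - 1)).reflect, by simp, by simp, ?_⟩
    ext v
    constructor
    · rintro ⟨i, rfl⟩; exact ⟨_, rfl⟩
    · rintro ⟨i, rfl⟩; exact ⟨s - 1 - i, by simp⟩
  · refine ⟨fun i => x ((s + 1) + i), h.shift (s + 1), by simp, by simp, ?_⟩
    ext v
    constructor
    · rintro ⟨i, rfl⟩; exact ⟨_, rfl⟩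
    · rintro ⟨i, rfl⟩; exact ⟨i - (s + 1), by simp⟩

/-- Colors along the cycle are determined by parity. -/
theorem IsAltCycle.color {V : Type*} {G : SimpleGraph V} {c : Sym2 V → Bool} {N : ℕ}
    {x : ZMod N → V} (h : IsAltCycle G c x) (k : ℕ) :
    c s(x (k : ZMod N), x ((k + 1 : ℕ) : ZMod N)) =
      (c s(x (-1), x 0) ^^ decide (k % 2 = 0)) := by
  induction k with
  | zero =>
    have := h.2.2 (-1)
    rw [show (-1 : ZMod N) + 1 = 0 by ring, show (-1 : ZMod N) + 2 = 1 by ring] at this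
    simp only [Nat.cast_zero, zero_add, Nat.cast_one]
    revert this
    cases c s(x (-1), x 0) <;> cases c s(x 0, x 1) <;> simp
  | succ k ih =>
    have := h.2.2 k
    rw [show (k : ZMod N) + 1 = ((k + 1 : ℕ) : ZMod N) by push_cast; ring,
      show (k : ZMod N) + 2 = ((k + 1 + 1 : ℕ) : ZMod N) by push_cast; ring, ih] at this
    revert this
    rcases Nat.mod_two_eq_zero_or_one k with hk | hk
    · have : (k + 1) % 2 = 1 := by omega
      cases c s(x (-1), x 0) <;> simp [hk, this]
    · have : (k + 1) % 2 = 0 := by omega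
      cases c s(x (-1), x 0) <;> simp [hk, this]

theorem merge_normalized {V : Type*} (G : SimpleGraph V) (c : Sym2 V → Bool)
    {n m : ℕ} (hn : 0 < n) (hm : 0 < m)
    (x : ZMod (2 * n) → V) (y : ZMod (2 * m) → V)
    (hx : IsAltCycle G c x) (hy : IsAltCycle G c y)
    (hdisj : Disjoint (Set.range x) (Set.range y))
    (a1 : G.Adj (x (-1)) (y 0)) (a2 : G.Adj (y (-1)) (x 0))
    (c1 : c s(x (-1), y 0) = c s(x (-1), x 0))
    (c2 : c s(y (-1), x 0) = c s(x (-1), x 0))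
    (c3 : c s(y (-1), y 0) = c s(x (-1), x 0)) :
    ∃ (N : ℕ) (z : ZMod N → V), IsAltCycle G c z ∧
      Set.range z = Set.range x ∪ Set.range y := by
  have : NeZero (2 * n) := ⟨by omega⟩
  have : NeZero (2 * m) := ⟨by omega⟩
  have : NeZero (2 * n + 2 * m) := ⟨by omega⟩
  have hne : ∀ i j, x i ≠ y j := fun i j h =>
    Set.disjoint_left.1 hdisj ⟨i, rfl⟩ ⟨j, h.symm⟩
  let F : ℕ → V := fun k =>
    if k < 2 * n then x (k : ZMod (2 * n)) else y ((k - 2 * n : ℕ) : ZMod (2 * m))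
  have Fx : ∀ k, k < 2 * n → F k = x (k : ZMod (2 * n)) := fun k hk => if_pos hk
  have Fy : ∀ j, F (2 * n + j) = y (j : ZMod (2 * m)) := fun j => by simp [F]
  let z : ZMod (2 * n + 2 * m) → V := fun i => F i.val
  have zk : ∀ k, k < 2 * n + 2 * m → z (k : ZMod (2 * n + 2 * m)) = F k := fun k hk => by
    simp only [z]; rw [ZMod.val_natCast_of_lt hk]
  have lastx : ((2 * n - 1 : ℕ) : ZMod (2 * n)) = -1 := by
    rw [Nat.cast_sub (by omega), ZMod.natCast_self]; simp
  have lasty : ((2 * m - 1 : ℕ) : ZMod (2 * m)) = -1 := by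
    rw [Nat.cast_sub (by omega), ZMod.natCast_self]; simp
  have key : ∀ k, k < 2 * n + 2 * m →
      G.Adj (z (k : ZMod (2 * n + 2 * m))) (z ((k + 1 : ℕ) : ZMod (2 * n + 2 * m))) ∧
      c s(z (k : ZMod (2 * n + 2 * m)), z ((k + 1 : ℕ) : ZMod (2 * n + 2 * m))) =
        (c s(x (-1), x 0) ^^ decide (k % 2 = 0)) := by
    intro k hk
    rw [zk k hk]
    by_cases h1 : k + 1 < 2 * n
    · rw [zk _ (by omega), Fx _ (by omega), Fx _ h1]
      refine ⟨?_, hx.color k⟩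
      have := hx.2.1 k
      rwa [← Nat.cast_succ] at this
    by_cases h2 : k + 1 = 2 * n
    · have e : k = 2 * n - 1 := by omega
      rw [zk _ (by omega), Fx _ (by omega), h2, show F (2 * n) = y 0 by simpa using Fy 0, e, lastx]
      refine ⟨a1, ?_⟩
      rw [c1]
      have : ¬ ((2 * n - 1) % 2 = 0) := by omega
      simp [this]
    obtain ⟨j, rfl⟩ : ∃ j, k = 2 * n + j := ⟨k - 2 * n, by omega⟩
    rw [Fy]
    by_cases h3 : j + 1 < 2 * m
    · rw [zk _ (by omega), add_assoc, Fy]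
      constructor
      · have := hy.2.1 j
        rwa [← Nat.cast_succ] at this
      · rw [hy.color j, c3, show (2 * n + j) % 2 = j % 2 by omega]
    · have e : j = 2 * m - 1 := by omega
      have e2 : 2 * n + j + 1 = 2 * n + 2 * m := by omega
      have hz : z 0 = x 0 := by
        have := zk 0 (by omega)
        rw [Fx 0 (by omega)] at this
        simpa using this
      have : ¬ ((2 * n + j) % 2 = 0) := by omega
      rw [e2, ZMod.natCast_self, hz]
      simp only [this]
      rw [e, lasty]
      exact ⟨a2, by simp [c2]⟩
  refine ⟨2 * n + 2 * m, z, ⟨?_, ?_, ?_⟩, ?_⟩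
  · intro i j hij
    apply ZMod.val_injective
    have hi := ZMod.val_lt i
    have hj := ZMod.val_lt j
    change F i.val = F j.val at hij
    generalize i.val = p at *
    generalize j.val = q at *
    by_cases hp : p < 2 * n <;> by_cases hq : q < 2 * n
    · rw [Fx _ hp, Fx _ hq] at hij
      have := congrArg ZMod.val (hx.1 hij)
      rwa [ZMod.val_natCast_of_lt hp, ZMod.val_natCast_of_lt hq] at this
    · simp only [F, if_pos hp, if_neg hq] at hij
      exact absurd hij (hne _ _)
    · simp only [F, if_pos hq, if_neg hp] at hij
      exact absurd hij.symm (hne _ _)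
    · simp only [F, if_neg hq, if_neg hp] at hij
      have := congrArg ZMod.val (hy.1 hij)
      rw [ZMod.val_natCast_of_lt (by omega), ZMod.val_natCast_of_lt (by omega)] at this
      omega
  · intro i
    have := (key i.val (ZMod.val_lt i)).1
    rwa [Nat.cast_succ, ZMod.natCast_zmod_val] at this
  · intro i
    have h1 := (key i.val (ZMod.val_lt i)).2
    have h2 := (key (i + 1).val (ZMod.val_lt _)).2
    rw [Nat.cast_succ, ZMod.natCast_zmod_val] at h1 h2
    rw [show i + 2 = i + 1 + 1 by ring, h1, h2]
    have hv : (i + 1).val % 2 = (i.val + 1) % 2 := by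
      have : (i + 1) = ((i.val + 1 : ℕ) : ZMod (2 * n + 2 * m)) := by
        rw [Nat.cast_succ, ZMod.natCast_zmod_val]
      rw [this, ZMod.val_natCast, Nat.mod_mod_of_dvd]
      exact ⟨n + m, by ring⟩
    rw [hv]
    rcases Nat.mod_two_eq_zero_or_one i.val with hk | hk
    · have : (i.val + 1) % 2 = 1 := by omega
      cases c s(x (-1), x 0) <;> simp [hk, this]
    · have : (i.val + 1) % 2 = 0 := by omega
      cases c s(x (-1), x 0) <;> simp [hk, this]
  · ext v
    constructor
    · rintro ⟨i, rfl⟩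
      change F i.val ∈ _
      simp only [F]
      split_ifs
      · exact Or.inl ⟨_, rfl⟩
      · exact Or.inr ⟨_, rfl⟩
    · rintro (⟨i, rfl⟩ | ⟨i, rfl⟩)
      · have := ZMod.val_lt i
        refine ⟨(i.val : ℕ), ?_⟩
        rw [zk _ (by omega), Fx _ this, ZMod.natCast_zmod_val]
      · have := ZMod.val_lt i
        refine ⟨((2 * n + i.val : ℕ) : ZMod _), ?_⟩
        rw [zk _ (by omega), Fy, ZMod.natCast_zmod_val]

/-- If `C₁` and `C₂` are two vertex-disjoint alternating cycles in a
2-edge-colored graph `G` and there is a good pair of edges between them, then `G`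
contains an alternating cycle whose vertex set is exactly `V(C₁) ∪ V(C₂)`. -/
theorem good_pair_merges_cycles {V : Type*} (G : SimpleGraph V) (c : Sym2 V → Bool)
    {n m : ℕ} (hn : 0 < n) (hm : 0 < m)
    (x : ZMod (2 * n) → V) (y : ZMod (2 * m) → V)
    (hx : IsAltCycle G c x) (hy : IsAltCycle G c y)
    (hdisj : Disjoint (Set.range x) (Set.range y))
    (hgp : HasGoodPair G c x y) :
    ∃ (N : ℕ) (z : ZMod N → V), IsAltCycle G c z ∧
      Set.range z = Set.range x ∪ Set.range y := by
  obtain ⟨s, s', t, t', hs, ht, a1, a2, c1, c2, c3⟩ := hgp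
  obtain ⟨X, hX, X0, X1, Xr⟩ := hx.normalize s s' hs
  obtain ⟨Y, hY, Y0, Y1, Yr⟩ := hy.normalize t' t (by
    rcases ht with rfl | rfl
    · right; ring
    · left; ring)
  rw [← Xr, ← Yr] at hdisj ⊢
  simp only [← X0, ← X1, ← Y0, ← Y1] at a1 a2 c1 c2 c3
  refine merge_normalized G c hn hm X Y hX hY hdisj a1 a2.symm c1.symm ?_ ?_
  · rw [Sym2.eq_swap, c2, c1]
  · rw [c3, c1]
end

section
/- Suppose G ∈ C_1 ⊕ C_2 where C_1 and C_2 are vertex-disjoint alternating cycles of lengths 2n and 2m regarded as 2-edge-colored graphs, and G has no good pair. Then for every exterior edge uv of G: (i) uv ∈ P_{uv}; (ii) |P_{uv}| = lcm(2n,2m) = 2·lcm(n,m); and (iii) P_{uv} contains exactly lcm(n,m) red edges and exactly lcm(n,m) blue edges. -/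
/-- `G` is a colored generalized sum of the two vertex-disjoint alternating cycles
`C₁ = x` (of length `2n`) and `C₂ = y` (of length `2m`), regarded as 2-edge-colored
graphs: the `x`- and `y`-vertices cover `V(G)` and have disjoint ranges, the edges of
`G` inside each part are exactly the corresponding cycle edges, both cycles are
alternating, and between any two vertices of different parts there is exactly one
(arbitrarily colored) edge. -/
def IsCGSTwoCycles {V : Type*} (G : SimpleGraph V) (c : Sym2 V → Bool) {n m : ℕ}
    (x : ZMod (2 * n) → V) (y : ZMod (2 * m) → V) : Prop :=
  IsAltCycle G c x ∧ IsAltCycle G c y ∧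
  Disjoint (Set.range x) (Set.range y) ∧
  (∀ v : V, v ∈ Set.range x ∪ Set.range y) ∧
  (∀ i j : ZMod (2 * n), G.Adj (x i) (x j) ↔ (j = i + 1 ∨ j = i - 1)) ∧
  (∀ i j : ZMod (2 * m), G.Adj (y i) (y j) ↔ (j = i + 1 ∨ j = i - 1)) ∧
  (∀ (i : ZMod (2 * n)) (j : ZMod (2 * m)), G.Adj (x i) (y j))

/-- The set of exterior edges of a colored generalized sum of the two cycles
`x` and `y`: the edges joining the two parts. -/
def extEdges {V : Type*} {N M : ℕ} (x : ZMod N → V) (y : ZMod M → V) : Set (Sym2 V) :=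
  {e | ∃ i j, e = s(x i, y j)}

/-- One step of the construction of a parallel class: from the exterior edge
`x a - y b`, move to the neighbor of `x a` on `C₁` and the neighbor of `y b` on `C₂`
joined to them by the cycle-edge whose color equals `c s(x a, y b)`. -/
def pstep {V : Type*} (c : Sym2 V → Bool) {N M : ℕ} (x : ZMod N → V) (y : ZMod M → V) :
    ZMod N × ZMod M → ZMod N × ZMod M :=
  fun p =>
    (if c s(x p.1, x (p.1 + 1)) = c s(x p.1, y p.2) then p.1 + 1 else p.1 - 1,
     if c s(y p.2, y (p.2 + 1)) = c s(x p.1, y p.2) then p.2 + 1 else p.2 - 1)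

/-- The parallel class `P_{uv}` of the exterior edge `u v = x a - y b`:
the set of exterior edges obtained from it by iterating `pstep`,
`lcm (2n) (2m)` times. -/
def parallelClass {V : Type*} (c : Sym2 V → Bool) {N M : ℕ}
    (x : ZMod N → V) (y : ZMod M → V) (a : ZMod N) (b : ZMod M) : Set (Sym2 V) :=
  {e | ∃ i < Nat.lcm N M,
    e = s(x ((pstep c x y)^[i] (a, b)).1, y ((pstep c x y)^[i] (a, b)).2)}

/-- The number of red exterior edges incident with `v`. -/
noncomputable def dred {V : Type*} (c : Sym2 V → Bool) {N M : ℕ}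
    (x : ZMod N → V) (y : ZMod M → V) (v : V) : ℕ :=
  {e : Sym2 V | e ∈ extEdges x y ∧ v ∈ e ∧ c e = true}.ncard

/-- The number of blue exterior edges incident with `v`. -/
noncomputable def dblue {V : Type*} (c : Sym2 V → Bool) {N M : ℕ}
    (x : ZMod N → V) (y : ZMod M → V) (v : V) : ℕ :=
  {e : Sym2 V | e ∈ extEdges x y ∧ v ∈ e ∧ c e = false}.ncard

theorem alt_dir {V : Type*} (c : Sym2 V → Bool) {N : ℕ} (z : ZMod N → V)
    (alt : ∀ i, c s(z i, z (i + 1)) ≠ c s(z (i + 1), z (i + 2))) (i : ZMod N) (k : Bool) :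
    ∃ ε : ZMod N, (ε = 1 ∨ ε = -1) ∧ c s(z i, z (i + ε)) = k := by
  by_cases h : c s(z i, z (i + 1)) = k
  · exact ⟨1, Or.inl rfl, h⟩
  · refine ⟨-1, Or.inr rfl, ?_⟩
    have := alt (i + -1)
    rw [show i + -1 + 1 = i by ring, show i + -1 + 2 = i + 1 by ring, Sym2.eq_swap] at this
    revert h this
    cases c s(z i, z (i + 1)) <;> cases c s(z i, z (i + -1)) <;> cases k <;> simp

theorem alt_if {V : Type*} (c : Sym2 V → Bool) {N : ℕ} (z : ZMod N → V)
    (alt : ∀ i, c s(z i, z (i + 1)) ≠ c s(z (i + 1), z (i + 2))) (i : ZMod N) (k : Bool)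
    (ε : ZMod N) (hε : ε = 1 ∨ ε = -1) (h : c s(z i, z (i + ε)) = k) :
    (if c s(z i, z (i + 1)) = k then i + 1 else i - 1) = i + ε := by
  rcases hε with rfl | rfl
  · rw [if_pos h]
  · have := alt (i + -1)
    rw [show i + -1 + 1 = i by ring, show i + -1 + 2 = i + 1 by ring, Sym2.eq_swap] at this
    rw [if_neg (fun h' => this (h.trans h'.symm)), sub_eq_add_neg]

theorem alt_next {V : Type*} (c : Sym2 V → Bool) {N : ℕ} (z : ZMod N → V)
    (alt : ∀ i, c s(z i, z (i + 1)) ≠ c s(z (i + 1), z (i + 2))) (i : ZMod N) (k : Bool)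
    (ε : ZMod N) (hε : ε = 1 ∨ ε = -1) (h : c s(z i, z (i + ε)) = k) :
    c s(z (i + ε), z (i + ε + ε)) = !k := by
  have key : c s(z i, z (i + ε)) ≠ c s(z (i + ε), z (i + ε + ε)) := by
    rcases hε with rfl | rfl
    · have := alt i
      rwa [show i + 2 = i + 1 + 1 by ring] at this
    · have := alt (i + -1 + -1)
      rw [show i + -1 + -1 + 1 = i + -1 by ring, show i + -1 + -1 + 2 = i by ring] at this
      rw [Sym2.eq_swap (a := z i), Sym2.eq_swap (a := z (i + -1)) (b := z (i + -1 + -1))]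
      exact this.symm
  rw [h] at key
  revert key
  cases c s(z (i + ε), z (i + ε + ε)) <;> cases k <;> simp

theorem unit_mul_eq {N : ℕ} (ε : ZMod N) (hε : ε = 1 ∨ ε = -1) (a : ZMod N) (i j : ℕ)
    (h : a + i * ε = a + j * ε) : i ≡ j [MOD N] := by
  rw [← ZMod.natCast_eq_natCast_iff]
  rcases hε with rfl | rfl <;> simpa using h

theorem ncard_par {α : Type*} (f : ℕ → α) (K r : ℕ) (hr : r < 2)
    (hf : ∀ i < 2 * K, ∀ j < 2 * K, f i = f j → i = j) (S : Set α)
    (hS : ∀ e, e ∈ S ↔ ∃ i < 2 * K, i % 2 = r ∧ e = f i) : S.ncard = K := by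
  have : S = (fun j => f (2 * j + r)) '' (Finset.range K : Set ℕ) := by
    ext e
    rw [hS]
    constructor
    · rintro ⟨i, hi, h2, rfl⟩
      refine ⟨i / 2, by simp; omega, ?_⟩
      change f _ = f _
      congr 1; omega
    · rintro ⟨j, hj, rfl⟩
      simp at hj
      exact ⟨2 * j + r, by omega, by omega, rfl⟩
  rw [this, Set.ncard_image_of_injOn, Set.ncard_coe_finset, Finset.card_range]
  intro i hi j hj h
  simp at hi hj
  have := hf _ (by omega) _ (by omega) h
  omega

/-- If `G ∈ C₁ ⊕ C₂` with `C₁, C₂` vertex-disjoint alternating cycles of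
lengths `2n` and `2m`, and `G` has no good pair, then for every exterior edge
`u v = x a - y b`: (i) `uv ∈ P_{uv}`; (ii) `|P_{uv}| = lcm (2n) (2m) = 2 * lcm n m`;
(iii) `P_{uv}` has exactly `lcm n m` red edges and exactly `lcm n m` blue edges. -/
theorem parallel_class_card {V : Type*} (G : SimpleGraph V) (c : Sym2 V → Bool)
    {n m : ℕ} (hn : 0 < n) (hm : 0 < m)
    (x : ZMod (2 * n) → V) (y : ZMod (2 * m) → V)
    (hG : IsCGSTwoCycles G c x y) (hgp : ¬ HasGoodPair G c x y)
    (a : ZMod (2 * n)) (b : ZMod (2 * m)) :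
    s(x a, y b) ∈ parallelClass c x y a b ∧
    (parallelClass c x y a b).ncard = Nat.lcm (2 * n) (2 * m) ∧
    Nat.lcm (2 * n) (2 * m) = 2 * Nat.lcm n m ∧
    {e ∈ parallelClass c x y a b | c e = true}.ncard = Nat.lcm n m ∧
    {e ∈ parallelClass c x y a b | c e = false}.ncard = Nat.lcm n m := by
  obtain ⟨⟨hxi, -, hxa⟩, ⟨hyi, -, hya⟩, hdis, -, -, -, hadj⟩ := hG
  have hL : Nat.lcm (2 * n) (2 * m) = 2 * Nat.lcm n m := Nat.lcm_mul_left ..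
  have hK : 0 < Nat.lcm n m := Nat.lcm_pos hn hm
  obtain ⟨ε, hε, hεc⟩ := alt_dir c x hxa a (c s(x a, y b))
  obtain ⟨δ, hδ, hδc⟩ := alt_dir c y hya b (c s(x a, y b))
  -- colour of the `i`-th edge
  let k : ℕ → Bool := fun i => if i % 2 = 0 then c s(x a, y b) else !c s(x a, y b)
  have hk : ∀ i, k (i + 1) = !k i := by
    intro i
    simp only [k]
    rcases Nat.mod_two_eq_zero_or_one i with h | h
    · rw [if_neg (by omega), if_pos h]
    · rw [if_pos (by omega), if_neg (by omega)]; simp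
  have main : ∀ i : ℕ, (pstep c x y)^[i] (a, b) = (a + i * ε, b + i * δ) ∧
      c s(x (a + i * ε), y (b + i * δ)) = k i ∧
      c s(x (a + i * ε), x (a + i * ε + ε)) = k i ∧
      c s(y (b + i * δ), y (b + i * δ + δ)) = k i := by
    intro i
    induction i with
    | zero => simpa [k] using ⟨hεc, hδc⟩
    | succ i ih =>
      obtain ⟨h1, h2, h3, h4⟩ := ih
      have e1 : a + ((i + 1 : ℕ) : ZMod (2 * n)) * ε = a + i * ε + ε := by push_cast; ring
      have e2 : b + ((i + 1 : ℕ) : ZMod (2 * m)) * δ = b + i * δ + δ := by push_cast; ring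
      rw [e1, e2, hk]
      refine ⟨?_, ?_, alt_next c x hxa _ _ ε hε h3, alt_next c y hya _ _ δ hδ h4⟩
      · rw [Function.iterate_succ_apply', h1]
        simp only [pstep]
        rw [h2, alt_if c x hxa _ _ ε hε h3, alt_if c y hya _ _ δ hδ h4]
      · by_contra hne
        apply hgp
        refine ⟨a + i * ε, a + i * ε + ε, b + i * δ, b + i * δ + δ, ?_, ?_, hadj _ _, hadj _ _,
          h3.trans h2.symm, ?_, ?_⟩
        · rcases hε with rfl | rfl
          · exact Or.inr rfl
          · exact Or.inl (sub_eq_add_neg _ _).symm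
        · rcases hδ with rfl | rfl
          · exact Or.inr rfl
          · exact Or.inl (sub_eq_add_neg _ _).symm
        · rw [h2]
          simpa using hne
        · rw [Sym2.eq_swap, h4, h2]
  let f : ℕ → Sym2 V := fun i => s(x (a + i * ε), y (b + i * δ))
  have hP : ∀ e, e ∈ parallelClass c x y a b ↔ ∃ i < 2 * Nat.lcm n m, e = f i := by
    intro e
    simp only [parallelClass, Set.mem_setOf_eq, (main _).1, hL, f]
  have hf : ∀ i < 2 * Nat.lcm n m, ∀ j < 2 * Nat.lcm n m, f i = f j → i = j := by
    intro i hi j hj h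
    have hxy : ∀ p q, x p ≠ y q := fun p q h =>
      Set.disjoint_left.mp hdis ⟨p, rfl⟩ ⟨q, h.symm⟩
    simp only [f, Sym2.eq_iff] at h
    rcases h with ⟨hx, hy⟩ | ⟨hx, -⟩
    · have h1 := unit_mul_eq ε hε a i j (hxi hx)
      have h2 := unit_mul_eq δ hδ b i j (hyi hy)
      have h3 : i ≡ j [MOD Nat.lcm (2 * n) (2 * m)] :=
        Nat.modEq_iff_dvd.2 (by
          rw [Int.natCast_dvd]
          exact Nat.lcm_dvd (Int.natCast_dvd.1 (Nat.modEq_iff_dvd.1 h1))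
            (Int.natCast_dvd.1 (Nat.modEq_iff_dvd.1 h2)))
      rw [hL] at h3
      exact Nat.ModEq.eq_of_lt_of_lt h3 hi hj
    · exact absurd hx (hxy _ _)
  have hcol : ∀ t, {e ∈ parallelClass c x y a b | c e = t}.ncard = Nat.lcm n m := by
    intro t
    refine ncard_par f _ (if c s(x a, y b) = t then 0 else 1) (by split_ifs <;> omega) hf _ ?_
    intro e
    have hkt : ∀ i, k i = t ↔ i % 2 = if c s(x a, y b) = t then 0 else 1 := by
      intro i
      simp only [k]
      rcases Nat.mod_two_eq_zero_or_one i with h | h <;> rw [h] <;>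
        cases c s(x a, y b) <;> cases t <;> simp
    simp only [Set.mem_setOf_eq, hP]
    constructor
    · rintro ⟨⟨i, hi, rfl⟩, hc⟩
      exact ⟨i, hi, (hkt i).1 ((main i).2.1.symm.trans hc), rfl⟩
    · rintro ⟨i, hi, h2, rfl⟩
      exact ⟨⟨i, hi, rfl⟩, (main i).2.1.trans ((hkt i).2 h2)⟩
  refine ⟨(hP _).2 ⟨0, by omega, by simp [f]⟩, ?_, hL, hcol _, hcol _⟩
  have : parallelClass c x y a b = f '' (Finset.range (2 * Nat.lcm n m) : Set ℕ) := by
    ext e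
    rw [hP]
    simp [eq_comm]
  rw [this, Set.ncard_image_of_injOn, Set.ncard_coe_finset, Finset.card_range, hL]
  intro i hi j hj h
  simp at hi hj
  exact hf _ hi _ hj h
end

section
/- Suppose G ∈ C_1 ⊕ C_2 where C_1 and C_2 are vertex-disjoint alternating cycles of lengths 2n and 2m regarded as 2-edge-colored graphs, and G has no good pair. If two parallel classes intersect, i.e., P_{uv} ∩ P_{wz} ≠ ∅ for exterior edges uv and wz, then P_{uv} = P_{wz}; consequently the set of parallel classes {P_{uv} : uv ∈ E_⊕} is a partition of the set E_⊕ of exterior edges of G. -/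
/-- The direction in which an edge of color `e` pushes the index `i` along the cycle `x`. -/
def pdir {V : Type*} (c : Sym2 V → Bool) {N : ℕ} (x : ZMod N → V) (i : ZMod N)
    (e : Bool) : ℤ :=
  if c s(x i, x (i + 1)) = e then 1 else -1

theorem pdir_edge {V : Type*} {c : Sym2 V → Bool} {N : ℕ} {x : ZMod N → V}
    (h : ∀ i, c s(x i, x (i + 1)) ≠ c s(x (i + 1), x (i + 2))) (i : ZMod N) (e : Bool) :
    c s(x i, x (i + (pdir c x i e : ℤ))) = e ∧
      pdir c x (i + (pdir c x i e : ℤ)) (!e) = pdir c x i e := by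
  by_cases hc : c s(x i, x (i + 1)) = e
  · have h1 : pdir c x i e = 1 := by simp [pdir, hc]
    have h2 := h i
    rw [h1]
    refine ⟨by simpa using hc, ?_⟩
    rw [hc] at h2
    have h3 : i + 1 + 1 = i + 2 := by ring
    unfold pdir
    rw [if_pos]
    push_cast
    rw [h3]
    revert h2
    cases e <;> cases c s(x (i + 1), x (i + 2)) <;> simp
  · have h1 : pdir c x i e = -1 := by simp [pdir, hc]
    have h2 := h (i - 1)
    have h3 : i - 1 + 1 = i := by ring
    have h4 : i - 1 + 2 = i + 1 := by ring
    rw [h3, h4] at h2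
    have h5 : c s(x (i - 1), x i) = e := by
      revert h2 hc
      cases e <;> cases c s(x (i - 1), x i) <;> cases c s(x i, x (i + 1)) <;> simp
    have h6 : i + ((-1 : ℤ) : ZMod N) = i - 1 := by push_cast; ring
    rw [h1, h6]
    refine ⟨by rw [Sym2.eq_swap]; exact h5, ?_⟩
    unfold pdir
    rw [if_neg]
    rw [h3, h5]
    cases e <;> simp

theorem pdir_cases {V : Type*} (c : Sym2 V → Bool) {N : ℕ} (x : ZMod N → V) (i : ZMod N)
    (e : Bool) : i + (pdir c x i e : ℤ) = i - 1 ∨ i + (pdir c x i e : ℤ) = i + 1 := by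
  unfold pdir
  split_ifs
  · right; simp
  · left; push_cast; ring

theorem pstep_eq {V : Type*} (c : Sym2 V → Bool) {N M : ℕ} (x : ZMod N → V)
    (y : ZMod M → V) (p : ZMod N × ZMod M) :
    pstep c x y p = (p.1 + (pdir c x p.1 (c s(x p.1, y p.2)) : ℤ),
      p.2 + (pdir c y p.2 (c s(x p.1, y p.2)) : ℤ)) := by
  unfold pstep pdir
  ext
  · dsimp only; split_ifs <;> push_cast <;> ring
  · dsimp only; split_ifs <;> push_cast <;> ring

theorem pstep_iter {V : Type*} {G : SimpleGraph V} {c : Sym2 V → Bool} {N M : ℕ}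
    {x : ZMod N → V} {y : ZMod M → V}
    (hx : ∀ i, c s(x i, x (i + 1)) ≠ c s(x (i + 1), x (i + 2)))
    (hy : ∀ i, c s(y i, y (i + 1)) ≠ c s(y (i + 1), y (i + 2)))
    (hadj : ∀ i j, G.Adj (x i) (y j)) (hgp : ¬ HasGoodPair G c x y)
    (k : ℕ) : ∀ p : ZMod N × ZMod M,
    (pstep c x y)^[k] p = (p.1 + (k : ZMod N) * (pdir c x p.1 (c s(x p.1, y p.2)) : ℤ),
      p.2 + (k : ZMod M) * (pdir c y p.2 (c s(x p.1, y p.2)) : ℤ)) := by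
  induction k with
  | zero => intro p; simp
  | succ k ih =>
    intro p
    obtain ⟨a, b⟩ := p
    rw [Function.iterate_succ_apply, ih, pstep_eq]
    dsimp only
    obtain ⟨hx1, hx2⟩ := pdir_edge hx a (c s(x a, y b))
    obtain ⟨hy1, hy2⟩ := pdir_edge hy b (c s(x a, y b))
    have hcx := pdir_cases c x a (c s(x a, y b))
    have hcy := pdir_cases c y b (c s(x a, y b))
    have hne : c s(x (a + (pdir c x a (c s(x a, y b)) : ℤ)),
        y (b + (pdir c y b (c s(x a, y b)) : ℤ))) = !(c s(x a, y b)) := by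
      by_contra hcon
      refine hgp ⟨a, _, b, _, hcx, hcy, hadj _ _, hadj _ _, hx1, ?_, ?_⟩
      · simpa using hcon
      · rw [Sym2.eq_swap]; exact hy1
    rw [hne, hx2, hy2]
    ext
    · dsimp only; push_cast; ring
    · dsimp only; push_cast; ring

theorem parallelClass_eq_orbit {V : Type*} {G : SimpleGraph V} {c : Sym2 V → Bool} {N M : ℕ}
    {x : ZMod N → V} {y : ZMod M → V} (hN : 0 < N) (hM : 0 < M)
    (hx : ∀ i, c s(x i, x (i + 1)) ≠ c s(x (i + 1), x (i + 2)))
    (hy : ∀ i, c s(y i, y (i + 1)) ≠ c s(y (i + 1), y (i + 2)))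
    (hadj : ∀ i j, G.Adj (x i) (y j)) (hgp : ¬ HasGoodPair G c x y)
    (p : ZMod N × ZMod M) (e : Sym2 V) :
    Function.IsPeriodicPt (pstep c x y) (Nat.lcm N M) p ∧
    (e ∈ parallelClass c x y p.1 p.2 ↔ ∃ i : ℕ,
      e = s(x ((pstep c x y)^[i] p).1, y ((pstep c x y)^[i] p).2)) := by
  have hper : Function.IsPeriodicPt (pstep c x y) (Nat.lcm N M) p := by
    unfold Function.IsPeriodicPt Function.IsFixedPt
    rw [pstep_iter hx hy hadj hgp]
    have h1 : ((Nat.lcm N M : ℕ) : ZMod N) = 0 :=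
      (ZMod.natCast_eq_zero_iff _ _).2 (Nat.dvd_lcm_left N M)
    have h2 : ((Nat.lcm N M : ℕ) : ZMod M) = 0 :=
      (ZMod.natCast_eq_zero_iff _ _).2 (Nat.dvd_lcm_right N M)
    rw [h1, h2]
    simp
  refine ⟨hper, ?_, ?_⟩
  · rintro ⟨i, -, h⟩
    exact ⟨i, h⟩
  · rintro ⟨i, h⟩
    refine ⟨i % Nat.lcm N M, Nat.mod_lt _ (Nat.lcm_pos hN hM), ?_⟩
    rw [hper.iterate_mod_apply]
    exact h

/-- If `G ∈ C₁ ⊕ C₂` with `C₁, C₂` vertex-disjoint alternating cycles of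
lengths `2n` and `2m`, and `G` has no good pair, then any two parallel classes which
intersect are equal; consequently the parallel classes form a partition of the set of
exterior edges of `G`: every class is a nonempty subset of `E_⊕`, distinct classes are
disjoint, and their union is all of `E_⊕`. -/
theorem parallel_classes_partition {V : Type*} (G : SimpleGraph V) (c : Sym2 V → Bool)
    {n m : ℕ} (hn : 0 < n) (hm : 0 < m)
    (x : ZMod (2 * n) → V) (y : ZMod (2 * m) → V)
    (hG : IsCGSTwoCycles G c x y) (hgp : ¬ HasGoodPair G c x y) :
    (∀ (a a' : ZMod (2 * n)) (b b' : ZMod (2 * m)),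
      (parallelClass c x y a b ∩ parallelClass c x y a' b').Nonempty →
        parallelClass c x y a b = parallelClass c x y a' b') ∧
    (∀ (a : ZMod (2 * n)) (b : ZMod (2 * m)), (parallelClass c x y a b).Nonempty) ∧
    (∀ (a : ZMod (2 * n)) (b : ZMod (2 * m)), parallelClass c x y a b ⊆ extEdges x y) ∧
    (⋃ (a : ZMod (2 * n)) (b : ZMod (2 * m)), parallelClass c x y a b) = extEdges x y := by
  obtain ⟨⟨hxi, -, hx⟩, ⟨hyi, -, hy⟩, hdis, -, -, -, hadj⟩ := hG
  have hN : 0 < 2 * n := by omega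
  have hM : 0 < 2 * m := by omega
  have key := parallelClass_eq_orbit hN hM hx hy hadj hgp
  have hne : ∀ i j, x i ≠ y j := fun i j h =>
    Set.disjoint_left.1 hdis ⟨i, rfl⟩ ⟨j, h.symm⟩
  have hL : 0 < Nat.lcm (2 * n) (2 * m) := Nat.lcm_pos hN hM
  have self : ∀ a b, s(x a, y b) ∈ parallelClass c x y a b := fun a b => ⟨0, hL, rfl⟩
  have sub : ∀ (p q : ZMod (2 * n) × ZMod (2 * m)) (i j : ℕ),
      (pstep c x y)^[i] p = (pstep c x y)^[j] q →
      parallelClass c x y p.1 p.2 ⊆ parallelClass c x y q.1 q.2 := by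
    intro p q i j h e he
    obtain ⟨k, hk⟩ := (key p e).2.1 he
    refine (key q e).2.2 ⟨k + (i * (Nat.lcm (2 * n) (2 * m) - 1)) + j, ?_⟩
    have hp : (pstep c x y)^[i * (Nat.lcm (2 * n) (2 * m) - 1) + i] p = p := by
      have h1 : i * (Nat.lcm (2 * n) (2 * m) - 1) + i = i * Nat.lcm (2 * n) (2 * m) := by
        obtain ⟨l, hl⟩ := Nat.exists_eq_succ_of_ne_zero hL.ne'
        rw [hl, Nat.succ_sub_one, Nat.mul_succ]
      rw [h1]
      exact (key p e).1.const_mul i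
    rw [Function.iterate_add_apply, ← h, ← Function.iterate_add_apply, add_assoc,
      Function.iterate_add_apply, hp]
    exact hk
  have subE : ∀ (a : ZMod (2 * n)) (b : ZMod (2 * m)),
      parallelClass c x y a b ⊆ extEdges x y := by
    rintro a b e ⟨i, -, h⟩
    exact ⟨_, _, h⟩
  refine ⟨?_, fun a b => ⟨_, self a b⟩, subE, ?_⟩
  · rintro a a' b b' ⟨e, ⟨i, -, hi⟩, ⟨j, -, hj⟩⟩
    have heq : (pstep c x y)^[i] (a, b) = (pstep c x y)^[j] (a', b') := by
      rw [hi, Sym2.eq_iff] at hj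
      rcases hj with ⟨h1, h2⟩ | ⟨h1, -⟩
      · exact Prod.ext (hxi h1) (hyi h2)
      · exact absurd h1 (hne _ _)
    exact Set.Subset.antisymm (sub (a, b) (a', b') i j heq)
      (sub (a', b') (a, b) j i heq.symm)
  · apply Set.Subset.antisymm
    · exact Set.iUnion_subset fun a => Set.iUnion_subset fun b => subE a b
    · rintro e ⟨a, b, rfl⟩
      exact Set.mem_iUnion.2 ⟨a, Set.mem_iUnion.2 ⟨b, self a b⟩⟩
end

section
/- Let C_1 = x_0 x_1 ⋯ x_{2n-1} x_0 and C_2 = y_0 y_1 ⋯ y_{2m-1} y_0 be two vertex-disjoint alternating cycles and let G be a 2-edge-colored graph in C_1 ⊕ C_2 such that G has no good pair. Then G has exactly 2mn red exterior edges and exactly 2mn blue exterior edges. -/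
/-- The neighbour of `i` on the cycle joined to it by the edge of color `col`. -/
def nbr {V : Type*} (c : Sym2 V → Bool) {N : ℕ} (x : ZMod N → V) (col : Bool)
    (i : ZMod N) : ZMod N :=
  if c s(x i, x (i + 1)) = col then i + 1 else i - 1

theorem nbr_cases {V : Type*} (c : Sym2 V → Bool) {N : ℕ} (x : ZMod N → V) (col : Bool)
    (i : ZMod N) : nbr c x col i = i - 1 ∨ nbr c x col i = i + 1 := by
  unfold nbr
  split_ifs <;> simp

theorem nbr_color {V : Type*} {G : SimpleGraph V} {c : Sym2 V → Bool} {N : ℕ}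
    {x : ZMod N → V} (h : IsAltCycle G c x) (col : Bool) (i : ZMod N) :
    c s(x i, x (nbr c x col i)) = col := by
  unfold nbr
  split_ifs with h1
  · exact h1
  · have h2 := h.2.2 (i - 1)
    rw [show i - 1 + 1 = i by ring, show i - 1 + 2 = i + 1 by ring] at h2
    rw [Sym2.eq_swap]
    revert h1 h2
    generalize c s(x i, x (i + 1)) = a
    generalize c s(x (i - 1), x i) = b
    revert a b col
    decide

theorem nbr_nbr {V : Type*} {G : SimpleGraph V} {c : Sym2 V → Bool} {N : ℕ}
    {x : ZMod N → V} (h : IsAltCycle G c x) (col : Bool) (i : ZMod N) :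
    nbr c x col (nbr c x col i) = i := by
  have h0 := nbr_color h col i
  by_cases h1 : c s(x i, x (i + 1)) = col
  · have e : nbr c x col i = i + 1 := by simp [nbr, h1]
    have h2 := h.2.2 i
    rw [show i + 2 = i + 1 + 1 by ring] at h2
    have h3 : ¬ c s(x (i + 1), x (i + 1 + 1)) = col := fun h4 => h2 (h1.trans h4.symm)
    rw [e]
    simp [nbr, h3]
  · have e : nbr c x col i = i - 1 := by simp [nbr, h1]
    rw [e, Sym2.eq_swap] at h0
    rw [e]
    simp [nbr, h0]

theorem card_color_le {V : Type*} (G : SimpleGraph V) (c : Sym2 V → Bool)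
    {N M : ℕ} [NeZero N] [NeZero M] (x : ZMod N → V) (y : ZMod M → V)
    (hx : IsAltCycle G c x) (hy : IsAltCycle G c y) (hadj : ∀ i j, G.Adj (x i) (y j))
    (hgp : ¬ HasGoodPair G c x y) (col : Bool) :
    (Finset.univ.filter fun p : ZMod N × ZMod M => c s(x p.1, y p.2) = col).card ≤
    (Finset.univ.filter fun p : ZMod N × ZMod M => c s(x p.1, y p.2) = !col).card := by
  apply Finset.card_le_card_of_injOn (fun p => (nbr c x col p.1, nbr c y col p.2))
  · rintro ⟨i, j⟩ hp
    simp only [Finset.coe_filter, Finset.mem_univ, true_and, Set.mem_ofPred_eq] at hp ⊢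
    rw [Bool.eq_not]
    intro h
    refine hgp ⟨i, nbr c x col i, j, nbr c y col j, nbr_cases .., nbr_cases .., hadj _ _,
      hadj _ _, ?_, ?_, ?_⟩
    · rw [nbr_color hx, hp]
    · rw [h, hp]
    · rw [Sym2.eq_swap, nbr_color hy, hp]
  · rintro ⟨i, j⟩ _ ⟨i', j'⟩ _ h
    simp only [Prod.mk.injEq] at h
    have h1 := congrArg (nbr c x col) h.1
    have h2 := congrArg (nbr c y col) h.2
    rw [nbr_nbr hx, nbr_nbr hx] at h1
    rw [nbr_nbr hy, nbr_nbr hy] at h2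
    rw [h1, h2]

theorem ncard_color {V : Type*} (c : Sym2 V → Bool)
    {N M : ℕ} [NeZero N] [NeZero M] (x : ZMod N → V) (y : ZMod M → V)
    (hx : Function.Injective x) (hy : Function.Injective y)
    (hd : Disjoint (Set.range x) (Set.range y)) (col : Bool) :
    {e ∈ extEdges x y | c e = col}.ncard =
    (Finset.univ.filter fun p : ZMod N × ZMod M => c s(x p.1, y p.2) = col).card := by
  have hinj : Function.Injective (fun p : ZMod N × ZMod M => s(x p.1, y p.2)) := by
    rintro ⟨i, j⟩ ⟨i', j'⟩ h
    simp only [Sym2.eq_iff] at h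
    rcases h with ⟨h1, h2⟩ | ⟨h1, h2⟩
    · rw [hx h1, hy h2]
    · exact absurd h1 (Set.disjoint_iff_forall_ne.1 hd ⟨_, rfl⟩ ⟨_, rfl⟩)
  rw [← Set.ncard_coe_finset, ← Set.ncard_image_of_injective _ hinj]
  congr 1
  ext e
  simp only [extEdges, Set.mem_ofPred_eq, Finset.coe_filter, Finset.mem_univ, true_and,
    Set.mem_image, Prod.exists]
  constructor
  · rintro ⟨⟨i, j, rfl⟩, h⟩
    exact ⟨i, j, h, rfl⟩
  · rintro ⟨i, j, h, rfl⟩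
    exact ⟨⟨i, j, rfl⟩, h⟩

/-- If `G ∈ C₁ ⊕ C₂` with `C₁, C₂` vertex-disjoint alternating cycles of
lengths `2n` and `2m`, and `G` has no good pair, then `G` has exactly `2mn` red exterior
edges and exactly `2mn` blue exterior edges. -/
theorem count_exterior_edges {V : Type*} (G : SimpleGraph V) (c : Sym2 V → Bool)
    {n m : ℕ} (hn : 0 < n) (hm : 0 < m)
    (x : ZMod (2 * n) → V) (y : ZMod (2 * m) → V)
    (hG : IsCGSTwoCycles G c x y) (hgp : ¬ HasGoodPair G c x y) :
    {e ∈ extEdges x y | c e = true}.ncard = 2 * m * n ∧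
    {e ∈ extEdges x y | c e = false}.ncard = 2 * m * n := by
  obtain ⟨hx, hy, hd, -, -, -, hadj⟩ := hG
  have : NeZero (2 * n) := ⟨by omega⟩
  have : NeZero (2 * m) := ⟨by omega⟩
  rw [ncard_color c x y hx.1 hy.1 hd, ncard_color c x y hx.1 hy.1 hd]
  have h1 := card_color_le G c x y hx hy hadj hgp true
  have h2 := card_color_le G c x y hx hy hadj hgp false
  have h3 := Finset.card_filter_add_card_filter_not
    (s := (Finset.univ : Finset (ZMod (2 * n) × ZMod (2 * m))))
    (fun p => c s(x p.1, y p.2) = true)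
  simp only [Bool.not_eq_true, Finset.card_univ, Fintype.card_prod, ZMod.card] at h3
  simp only [Bool.not_true, Bool.not_false] at h1 h2
  have h4 : 2 * n * (2 * m) = 2 * (2 * m * n) := by ring
  omega
end

section
/- Let C_1 = x_0 x_1 ⋯ x_{2n-1} x_0 and C_2 = y_0 y_1 ⋯ y_{2m-1} y_0 be two vertex-disjoint alternating cycles and let G ∈ C_1 ⊕ C_2 have no good pair. Let P_{uv} be a parallel class. Then each vertex w ∈ V(C_1) is incident with exactly lcm(n,m)/n edges of P_{uv}, each vertex w ∈ V(C_2) is incident with exactly lcm(n,m)/m edges of P_{uv}, and for each fixed vertex w all the edges of P_{uv} incident with w have the same color. Moreover, for vertices w, x ∈ V(C_i) (i ∈ {1,2}), the edges of P_{uv} incident with w have the same color as the edges of P_{uv} incident with x if and only if w ≡ x (mod 2). -/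
theorem pc_side {V : Type*} {n : ℕ} (hn : 0 < n) (L : ℕ) (hL : 0 < L) (hd : 2 * n ∣ L)
    (a ε : ZMod (2 * n)) (hε : ε = 1 ∨ ε = -1) (E : ℕ → Sym2 V)
    (hinj : ∀ i < L, ∀ j < L, E i = E j → i = j) (X : ZMod (2 * n) → V)
    (hmem : ∀ w i, X w ∈ E i ↔ w = a + i * ε) (c : Sym2 V → Bool)
    (hc : ∀ i, c (E (i + 1)) = !c (E i)) (P : Set (Sym2 V))
    (hP : P = {e | ∃ i < L, e = E i}) :
    (∀ w, {e ∈ P | X w ∈ e}.ncard = L / (2 * n)) ∧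
    (∀ w, ∀ e ∈ P, X w ∈ e → ∀ e' ∈ P, X w ∈ e' → c e = c e') ∧
    (∀ w z, ((∀ e ∈ P, X w ∈ e → ∀ e' ∈ P, X z ∈ e' → c e = c e') ↔
        w.val % 2 = z.val % 2)) := by
  subst hP
  have : NeZero (2 * n) := ⟨by omega⟩
  have hεε : ε * ε = 1 := by rcases hε with h | h <;> simp [h]
  obtain ⟨K, rfl⟩ := hd
  have hK : 0 < K := Nat.pos_of_mul_pos_left hL
  -- solve for the index
  have hsol : ∀ w : ZMod (2 * n), ∀ i : ℕ,
      w = a + i * ε ↔ i % (2 * n) = ((w - a) * ε).val := by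
    intro w i
    have h1 : w = a + i * ε ↔ (i : ZMod (2 * n)) = (w - a) * ε := by
      constructor
      · intro h; rw [h]; linear_combination (-(i : ZMod (2 * n))) * hεε
      · intro h; rw [h]; linear_combination (a - w) * hεε
    rw [h1, ← ZMod.val_natCast]
    exact ⟨fun h => by rw [h], fun h => ZMod.val_injective _ h⟩
  have hcol : ∀ i, c (E i) = (c (E 0) ^^ decide (i % 2 = 1)) := by
    intro i
    induction i with
    | zero => simp
    | succ i ih =>
      rw [hc, ih]
      rcases Nat.mod_two_eq_zero_or_one i with h | h
      · have : (i + 1) % 2 = 1 := by omega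
        simp [h, this]
      · have : (i + 1) % 2 = 0 := by omega
        simp [h, this]
  let φ := ZMod.castHom (Dvd.intro n rfl : 2 ∣ 2 * n) (ZMod 2)
  have hφε : φ ε = 1 := by
    rcases hε with h | h
    · rw [h, map_one]
    · rw [h, map_neg, map_one]; decide
  have hφ : ∀ w : ZMod (2 * n), φ w = (w.val : ZMod 2) := by
    intro w
    conv_lhs => rw [← ZMod.natCast_zmod_val w]
    rw [map_natCast]
  have hpar : ∀ w z : ZMod (2 * n), ∀ i j : ℕ, w = a + i * ε → z = a + j * ε →
      (c (E i) = c (E j) ↔ w.val % 2 = z.val % 2) := by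
    intro w z i j hw hz
    have e1 : w.val % 2 = z.val % 2 ↔ i % 2 = j % 2 := by
      have : ((w.val : ℕ) : ZMod 2) = z.val ↔ (i : ZMod 2) = j := by
        rw [← hφ, ← hφ, hw, hz]
        simp [hφε]
      rwa [ZMod.natCast_eq_natCast_iff', ZMod.natCast_eq_natCast_iff'] at this
    rw [e1, hcol i, hcol j]
    rcases Nat.mod_two_eq_zero_or_one i with h | h <;>
    rcases Nat.mod_two_eq_zero_or_one j with h' | h' <;> simp [h, h']
  have hlt : ∀ w : ZMod (2 * n), ((w - a) * ε).val < 2 * n := fun w => ZMod.val_lt _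
  refine ⟨?_, ?_, ?_⟩
  · intro w
    have hset : {e ∈ {e | ∃ i < 2 * n * K, e = E i} | X w ∈ e} =
        Set.image (fun k => E (((w - a) * ε).val + 2 * n * k))
          ((Finset.range K : Finset ℕ) : Set ℕ) := by
      ext e
      simp only [Set.mem_ofPred_eq, Set.mem_image,
        Finset.coe_range, Set.mem_Iio]
      constructor
      · rintro ⟨⟨i, hi, rfl⟩, h⟩
        rw [hmem, hsol] at h
        refine ⟨i / (2 * n), Nat.div_lt_of_lt_mul hi, ?_⟩
        rw [← h, Nat.mod_add_div]
      · rintro ⟨k, hk, rfl⟩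
        refine ⟨⟨_, ?_, rfl⟩, ?_⟩
        · calc _ < 2 * n + 2 * n * k := by have := hlt w; omega
            _ = 2 * n * (k + 1) := by ring
            _ ≤ _ := Nat.mul_le_mul_left _ hk
        · rw [hmem, hsol, Nat.add_mul_mod_self_left, Nat.mod_eq_of_lt (hlt w)]
    rw [hset, Set.InjOn.ncard_image, Set.ncard_coe_finset, Finset.card_range,
      Nat.mul_div_cancel_left _ (by omega)]
    have hb : ∀ k < K, ((w - a) * ε).val + 2 * n * k < 2 * n * K := by
      intro k hk
      calc _ < 2 * n + 2 * n * k := by have := hlt w; omega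
            _ = 2 * n * (k + 1) := by ring
            _ ≤ _ := Nat.mul_le_mul_left _ hk
    intro k hk l hl h
    simp only [Finset.coe_range, Set.mem_Iio] at hk hl
    have := hinj _ (hb k hk) _ (hb l hl) h
    exact Nat.eq_of_mul_eq_mul_left (by omega : 0 < 2 * n) (by omega)
  · rintro w _ ⟨i, hi, rfl⟩ h _ ⟨j, hj, rfl⟩ h'
    exact (hpar w w i j ((hmem _ _).1 h) ((hmem _ _).1 h')).2 rfl
  · intro w z
    constructor
    · intro H
      have key : ∀ w : ZMod (2 * n), ∃ i < 2 * n * K, w = a + i * ε := fun w =>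
        ⟨((w - a) * ε).val, (hlt w).trans_le (Nat.le_mul_of_pos_right _ hK),
          (hsol _ _).2 (Nat.mod_eq_of_lt (hlt w))⟩
      obtain ⟨i, hi, hwi⟩ := key w
      obtain ⟨j, hj, hzj⟩ := key z
      exact (hpar w z i j hwi hzj).1
        (H _ ⟨i, hi, rfl⟩ ((hmem _ _).2 hwi) _ ⟨j, hj, rfl⟩ ((hmem _ _).2 hzj))
    · rintro H _ ⟨i, hi, rfl⟩ h _ ⟨j, hj, rfl⟩ h'
      exact (hpar w z i j ((hmem _ _).1 h) ((hmem _ _).1 h')).2 H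

/-- Direction of the cycle edge of a given color. -/
theorem pc_dir {V : Type*} {G : SimpleGraph V} {c : Sym2 V → Bool} {N : ℕ}
    {x : ZMod N → V} (h : IsAltCycle G c x) (p ε : ZMod N) (hε : ε = 1 ∨ ε = -1) (k : Bool)
    (hk : c s(x p, x (p + ε)) = k) :
    (if c s(x p, x (p + 1)) = k then p + 1 else p - 1) = p + ε ∧
    c s(x (p + ε), x (p + ε + ε)) = !k := by
  obtain ⟨-, -, h⟩ := h
  rcases hε with rfl | rfl
  · have := h p
    rw [show p + 2 = p + 1 + 1 by ring] at this
    refine ⟨by simp [hk], ?_⟩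
    rw [hk] at this
    revert this; cases k <;> simp
  · have h1 := h (p - 1)
    have h2 := h (p - 2)
    rw [show p - 1 + 1 = p by ring, show p - 1 + 2 = p + 1 by ring] at h1
    rw [show p - 2 + 1 = p - 1 by ring, show p - 2 + 2 = p by ring] at h2
    rw [show p + -1 = p - 1 by ring] at *
    rw [show p - 1 + -1 = p - 2 by ring]
    rw [Sym2.eq_swap] at hk
    rw [hk] at h1 h2
    refine ⟨if_neg (Ne.symm h1), ?_⟩
    rw [Sym2.eq_swap]
    revert h2; cases k <;> simp

theorem pc_exists {V : Type*} {G : SimpleGraph V} {c : Sym2 V → Bool} {N : ℕ}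
    {x : ZMod N → V} (h : IsAltCycle G c x) (p : ZMod N) (k : Bool) :
    ∃ ε : ZMod N, (ε = 1 ∨ ε = -1) ∧ c s(x p, x (p + ε)) = k := by
  by_cases hk : c s(x p, x (p + 1)) = k
  · exact ⟨1, Or.inl rfl, hk⟩
  · refine ⟨-1, Or.inr rfl, ?_⟩
    have h1 := h.2.2 (p - 1)
    rw [show p - 1 + 1 = p by ring, show p - 1 + 2 = p + 1 by ring] at h1
    rw [Sym2.eq_swap, show p + -1 = p - 1 by ring]
    revert h1 hk
    generalize c s(x p, x (p + 1)) = u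
    generalize c s(x (p - 1), x p) = v
    revert u v k; decide

/-- Let `G ∈ C₁ ⊕ C₂` (two vertex-disjoint alternating cycles of lengths
`2n`, `2m`) have no good pair and let `P = P_{uv}` be the parallel class of the exterior
edge `x a - y b`. Then every vertex `x w` of `C₁` is incident with exactly
`lcm n m / n` edges of `P`, every vertex `y w` of `C₂` is incident with exactly
`lcm n m / m` edges of `P`, all edges of `P` incident with a fixed vertex are colored
alike, and for two vertices `w, z` on the same cycle, the edges of `P` at `w` are colored
alike as those at `z` iff `w ≡ z (mod 2)`. -/
theorem parallel_class_at_vertices {V : Type*} (G : SimpleGraph V) (c : Sym2 V → Bool)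
    {n m : ℕ} (hn : 0 < n) (hm : 0 < m)
    (x : ZMod (2 * n) → V) (y : ZMod (2 * m) → V)
    (hG : IsCGSTwoCycles G c x y) (hgp : ¬ HasGoodPair G c x y)
    (a : ZMod (2 * n)) (b : ZMod (2 * m)) :
    (∀ w : ZMod (2 * n),
      {e ∈ parallelClass c x y a b | x w ∈ e}.ncard = Nat.lcm n m / n) ∧
    (∀ w : ZMod (2 * m),
      {e ∈ parallelClass c x y a b | y w ∈ e}.ncard = Nat.lcm n m / m) ∧
    (∀ w : ZMod (2 * n), ∀ e ∈ parallelClass c x y a b, x w ∈ e →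
      ∀ e' ∈ parallelClass c x y a b, x w ∈ e' → c e = c e') ∧
    (∀ w : ZMod (2 * m), ∀ e ∈ parallelClass c x y a b, y w ∈ e →
      ∀ e' ∈ parallelClass c x y a b, y w ∈ e' → c e = c e') ∧
    (∀ w z : ZMod (2 * n),
      ((∀ e ∈ parallelClass c x y a b, x w ∈ e →
        ∀ e' ∈ parallelClass c x y a b, x z ∈ e' → c e = c e') ↔
        w.val % 2 = z.val % 2)) ∧
    (∀ w z : ZMod (2 * m),
      ((∀ e ∈ parallelClass c x y a b, y w ∈ e →
        ∀ e' ∈ parallelClass c x y a b, y z ∈ e' → c e = c e') ↔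
        w.val % 2 = z.val % 2)) := by
  obtain ⟨hx, hy, hdis, -, -, -, hadj⟩ := hG
  obtain ⟨ε, hε, hεc⟩ := pc_exists hx a (c s(x a, y b))
  obtain ⟨δ, hδ, hδc⟩ := pc_exists hy b (c s(x a, y b))
  have hxy : ∀ i j, x i ≠ y j := fun i j h =>
    Set.disjoint_left.1 hdis ⟨i, rfl⟩ ⟨j, h.symm⟩
  -- one step
  have hnext : ∀ p q, c s(x p, x (p + ε)) = c s(x p, y q) →
      c s(y q, y (q + δ)) = c s(x p, y q) →
      c s(x (p + ε), y (q + δ)) = !c s(x p, y q) := by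
    intro p q h1 h2
    by_contra h3
    apply hgp
    refine ⟨p, p + ε, q, q + δ, ?_, ?_, hadj _ _, hadj _ _, h1, ?_, ?_⟩
    · rcases hε with rfl | rfl
      · exact Or.inr rfl
      · exact Or.inl (by ring)
    · rcases hδ with rfl | rfl
      · exact Or.inr rfl
      · exact Or.inl (by ring)
    · simpa using h3
    · rw [Sym2.eq_swap]; exact h2
  have hinv : ∀ i : ℕ, (pstep c x y)^[i] (a, b) = (a + i * ε, b + i * δ) ∧
      c s(x (a + i * ε), x (a + i * ε + ε)) = c s(x (a + i * ε), y (b + i * δ)) ∧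
      c s(y (b + i * δ), y (b + i * δ + δ)) = c s(x (a + i * ε), y (b + i * δ)) := by
    intro i
    induction i with
    | zero => simpa using ⟨hεc, hδc⟩
    | succ i ih =>
      obtain ⟨h0, h1, h2⟩ := ih
      have e1 : a + ((i + 1 : ℕ) : ZMod (2 * n)) * ε = a + i * ε + ε := by push_cast; ring
      have e2 : b + ((i + 1 : ℕ) : ZMod (2 * m)) * δ = b + i * δ + δ := by push_cast; ring
      rw [e1, e2, hnext _ _ h1 h2]
      have d1 := pc_dir hx _ ε hε _ h1
      have d2 := pc_dir hy _ δ hδ _ h2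
      refine ⟨?_, d1.2, d2.2⟩
      rw [Function.iterate_succ_apply', h0]
      exact Prod.ext d1.1 d2.1
  let E : ℕ → Sym2 V := fun i => s(x (a + i * ε), y (b + i * δ))
  have hP : parallelClass c x y a b = {e | ∃ i < Nat.lcm (2 * n) (2 * m), e = E i} := by
    unfold parallelClass
    simp only [fun i => (hinv i).1]
    rfl
  have hc : ∀ i, c (E (i + 1)) = !c (E i) := by
    intro i
    have e1 : a + ((i + 1 : ℕ) : ZMod (2 * n)) * ε = a + i * ε + ε := by push_cast; ring
    have e2 : b + ((i + 1 : ℕ) : ZMod (2 * m)) * δ = b + i * δ + δ := by push_cast; ring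
    change c s(x (a + ((i + 1 : ℕ) : ZMod (2 * n)) * ε),
      y (b + ((i + 1 : ℕ) : ZMod (2 * m)) * δ)) = _
    rw [e1, e2]
    exact hnext _ _ (hinv i).2.1 (hinv i).2.2
  have hmx : ∀ w i, x w ∈ E i ↔ w = a + i * ε := by
    intro w i
    simp only [E, Sym2.mem_iff, hx.1.eq_iff, hxy, or_false]
  have hmy : ∀ w i, y w ∈ E i ↔ w = b + i * δ := by
    intro w i
    simp only [E, Sym2.mem_iff, hy.1.eq_iff, (hxy _ _).symm, false_or]
  have hcancel : ∀ {N : ℕ} (a ε : ZMod N) (i j : ℕ), (ε = 1 ∨ ε = -1) →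
      a + i * ε = a + j * ε → i ≡ j [MOD N] := by
    intro N a ε i j hε h
    rw [← ZMod.natCast_eq_natCast_iff]
    rcases hε with rfl | rfl <;> simpa using h
  have hinj : ∀ i < Nat.lcm (2 * n) (2 * m), ∀ j < Nat.lcm (2 * n) (2 * m),
      E i = E j → i = j := by
    intro i hi j hj h
    have m1 := hcancel a ε i j hε ((hmx _ _).1 (h ▸ (hmx _ _).2 rfl))
    have m2 := hcancel b δ i j hδ ((hmy _ _).1 (h ▸ (hmy _ _).2 rfl))
    have m3 : i ≡ j [MOD Nat.lcm (2 * n) (2 * m)] := by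
      rw [← Int.natCast_modEq_iff, Int.modEq_iff_dvd] at *
      have := Int.coe_lcm_dvd m1 m2
      rwa [Int.lcm_natCast_natCast] at this
    exact Nat.ModEq.eq_of_lt_of_lt m3 hi hj
  have hL : 0 < Nat.lcm (2 * n) (2 * m) := Nat.lcm_pos (by omega) (by omega)
  obtain ⟨x1, x2, x3⟩ := pc_side hn _ hL (Nat.dvd_lcm_left _ _) a ε hε E hinj x hmx c hc _ hP
  obtain ⟨y1, y2, y3⟩ := pc_side hm _ hL (Nat.dvd_lcm_right _ _) b δ hδ E hinj y hmy c hc _ hP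
  rw [Nat.lcm_mul_left] at x1 y1
  refine ⟨fun w => ?_, fun w => ?_, x2, y2, x3, y3⟩
  · rw [x1, Nat.mul_div_mul_left _ _ (by norm_num)]
  · rw [y1, Nat.mul_div_mul_left _ _ (by norm_num)]
end

section
/- Let G_1 and G_2 be two vertex-disjoint 2-edge-colored graphs with Hamiltonian alternating cycles C_1 and C_2 respectively, and let G ∈ G_1 ⊕ G_2. If there is no good pair in G, and for each i ∈ {1,2} there is at least one vertex of C_i that is non-singular with respect to C_{3−i}, then every vertex w of G satisfies d_r(w) ≥ 1 and d_b(w) ≥ 1; in particular, no vertex of C_i is singular with respect to C_{3−i}, for i ∈ {1,2}. -/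
/-- `G` is a colored generalized sum `G ∈ G₁ ⊕ G₂` of two vertex-disjoint 2-edge-colored
graphs `G₁`, `G₂` with Hamiltonian alternating cycles `C₁ = x` (of length `2n`) and
`C₂ = y` (of length `2m`): here `G₁`, `G₂` are the induced colored subgraphs of `G` on
`V(G₁) = range x` and `V(G₂) = range y`, so the conditions are that `x` and `y` are
alternating cycles of `G` with disjoint ranges covering `V(G)` (Hamiltonicity of `Cᵢ`
in `Gᵢ`), and between any two vertices of different parts there is exactly one
(arbitrarily colored) edge of `G`. -/
def IsCGSHam {V : Type*} (G : SimpleGraph V) (c : Sym2 V → Bool) {n m : ℕ}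
    (x : ZMod (2 * n) → V) (y : ZMod (2 * m) → V) : Prop :=
  IsAltCycle G c x ∧ IsAltCycle G c y ∧
  Disjoint (Set.range x) (Set.range y) ∧
  (∀ v : V, v ∈ Set.range x ∪ Set.range y) ∧
  (∀ (i : ZMod (2 * n)) (j : ZMod (2 * m)), G.Adj (x i) (y j))

/-- The vertex `x i` of `C₁` is singular with respect to `C₂`: the set of edges from
`x i` to `V(C₂)` (in a colored generalized sum these are all pairs `x i - y j`) is
nonempty and they all have the same color. -/
def SingularX {V : Type*} (c : Sym2 V → Bool) {N M : ℕ}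
    (x : ZMod N → V) (y : ZMod M → V) (i : ZMod N) : Prop :=
  (∃ _j : ZMod M, True) ∧ ∀ j j' : ZMod M, c s(x i, y j) = c s(x i, y j')

/-- The vertex `y j` of `C₂` is singular with respect to `C₁`. -/
def SingularY {V : Type*} (c : Sym2 V → Bool) {N M : ℕ}
    (x : ZMod N → V) (y : ZMod M → V) (j : ZMod M) : Prop :=
  (∃ _i : ZMod N, True) ∧ ∀ i i' : ZMod N, c s(x i, y j) = c s(x i', y j)

theorem aux_sing {N M : ℕ} [NeZero N] (e : ZMod N → Bool) (f : ZMod M → Bool)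
    (a : ZMod N → ZMod M → Bool) (he : ∀ i, e i ≠ e (i + 1)) (hf : ∀ j, f j ≠ f (j + 1))
    (h1 : ∀ i j, f j = e i → a i j = e i → a (i + 1) (j + 1) ≠ e i)
    (h2 : ∀ i j, f j = e i → a i (j + 1) = e i → a (i + 1) j ≠ e i)
    (i0 : ZMod N) (hs : ∀ j j', a i0 j = a i0 j') (i : ZMod N) :
    ∀ j j', a i j = a i j' := by
  have hf' : ∀ j κ, f j = κ ∨ f (j - 1) = κ := by
    intro j κ
    have := hf (j - 1)
    rw [sub_add_cancel] at this
    revert this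
    cases f j <;> cases f (j - 1) <;> cases κ <;> simp
  have he' : ∀ i, e (i - 1) ≠ e i := by
    intro i
    have := he (i - 1)
    rwa [sub_add_cancel] at this
  have key : ∀ i, (∀ j, a i j = e i) → ∀ j, a (i + 1) j = e (i + 1) := by
    intro i hi j
    have h : a (i + 1) j ≠ e i := by
      rcases hf' j (e i) with h | h
      · exact h2 i j h (hi _)
      · have := h1 i (j - 1) h (hi _)
        rwa [sub_add_cancel] at this
    have := he i
    revert h this
    cases a (i + 1) j <;> cases e i <;> cases e (i + 1) <;> simp
  have key' : ∀ i, (∀ j, a i j = e (i - 1)) → ∀ j, a (i - 1) j = e (i - 1 - 1) := by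
    intro i hi j
    have h : a (i - 1) j ≠ e (i - 1) := by
      intro hc
      rcases hf' j (e (i - 1)) with h | h
      · have := h1 (i - 1) j h hc
        rw [sub_add_cancel] at this
        exact this (hi _)
      · have := h2 (i - 1) (j - 1) h (by rwa [sub_add_cancel])
        rw [sub_add_cancel] at this
        exact this (hi _)
    have := he' (i - 1)
    revert h this
    cases a (i - 1) j <;> cases e (i - 1) <;> cases e (i - 1 - 1) <;> simp
  by_cases h0 : a i0 0 = e i0
  · have : ∀ k : ℕ, ∀ j, a (i0 + k) j = e (i0 + k) := by
      intro k
      induction k with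
      | zero => intro j; simpa using (hs j 0).trans h0
      | succ k ih =>
        have := key _ ih
        simpa [add_assoc] using this
    have h := this (i - i0).val
    rw [ZMod.natCast_zmod_val, add_sub_cancel] at h
    intro j j'
    rw [h, h]
  · have h0' : a i0 0 = e (i0 - 1) := by
      have := he' i0
      revert h0 this
      cases a i0 0 <;> cases e i0 <;> cases e (i0 - 1) <;> simp
    have : ∀ k : ℕ, ∀ j, a (i0 - k) j = e (i0 - k - 1) := by
      intro k
      induction k with
      | zero => intro j; simpa using (hs j 0).trans h0'
      | succ k ih =>
        have := key' _ ih
        simpa [sub_sub] using this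
    have h := this (i0 - i).val
    rw [ZMod.natCast_zmod_val, sub_sub_cancel] at h
    intro j j'
    rw [h, h]

/-- Let `G ∈ G₁ ⊕ G₂` where `G₁`, `G₂` have Hamiltonian alternating
cycles `C₁ = x`, `C₂ = y`. If `G` has no good pair and each `Cᵢ` has a vertex that is
non-singular with respect to `C_{3-i}`, then every vertex `w` of `G` satisfies
`d_r(w) ≥ 1` and `d_b(w) ≥ 1`; in particular no vertex of `Cᵢ` is singular with respect
to `C_{3-i}`. -/
theorem no_singular_vertices {V : Type*} (G : SimpleGraph V) (c : Sym2 V → Bool)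
    {n m : ℕ} (hn : 0 < n) (hm : 0 < m)
    (x : ZMod (2 * n) → V) (y : ZMod (2 * m) → V)
    (hG : IsCGSHam G c x y) (hgp : ¬ HasGoodPair G c x y)
    (hns1 : ∃ i, ¬ SingularX c x y i) (hns2 : ∃ j, ¬ SingularY c x y j) :
    (∀ w : V, 1 ≤ dred c x y w ∧ 1 ≤ dblue c x y w) ∧
    (∀ i, ¬ SingularX c x y i) ∧ (∀ j, ¬ SingularY c x y j) := by
  haveI : NeZero (2 * n) := ⟨by omega⟩
  haveI : NeZero (2 * m) := ⟨by omega⟩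
  obtain ⟨⟨-, -, hx⟩, ⟨-, -, hy⟩, -, hcov, hadj⟩ := hG
  have he : ∀ i, c s(x i, x (i + 1)) ≠ c s(x (i + 1), x (i + 1 + 1)) := by
    intro i
    have := hx i
    rwa [show i + 2 = i + 1 + 1 by ring] at this
  have hf : ∀ i, c s(y i, y (i + 1)) ≠ c s(y (i + 1), y (i + 1 + 1)) := by
    intro i
    have := hy i
    rwa [show i + 2 = i + 1 + 1 by ring] at this
  have g1 : ∀ i j, c s(y j, y (j + 1)) = c s(x i, x (i + 1)) →
      c s(x i, y j) = c s(x i, x (i + 1)) →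
      c s(x (i + 1), y (j + 1)) ≠ c s(x i, x (i + 1)) := by
    intro i j hfe h1 h2
    refine hgp ⟨i, i + 1, j, j + 1, Or.inr rfl, Or.inr rfl, hadj _ _, hadj _ _,
      h1.symm, h2.trans h1.symm, ?_⟩
    rw [Sym2.eq_swap, hfe, h1]
  have g2 : ∀ i j, c s(y j, y (j + 1)) = c s(x i, x (i + 1)) →
      c s(x i, y (j + 1)) = c s(x i, x (i + 1)) →
      c s(x (i + 1), y j) ≠ c s(x i, x (i + 1)) := by
    intro i j hfe h1 h2
    refine hgp ⟨i, i + 1, j + 1, j, Or.inr rfl, Or.inl (by ring), hadj _ _, hadj _ _,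
      h1.symm, h2.trans h1.symm, ?_⟩
    rw [hfe, h1]
  have hX : ∀ i, ¬ SingularX c x y i := by
    rintro i ⟨-, hi⟩
    obtain ⟨i', hi'⟩ := hns1
    exact hi' ⟨⟨0, trivial⟩, aux_sing (fun i => c s(x i, x (i + 1)))
      (fun j => c s(y j, y (j + 1))) (fun i j => c s(x i, y j)) he hf g1 g2 i hi i'⟩
  have hY : ∀ j, ¬ SingularY c x y j := by
    rintro j ⟨-, hj⟩
    obtain ⟨j', hj'⟩ := hns2
    exact hj' ⟨⟨0, trivial⟩, aux_sing (fun j => c s(y j, y (j + 1)))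
      (fun i => c s(x i, x (i + 1))) (fun j i => c s(x i, y j)) hf he
      (fun j i h h1 h2 => g1 i j h.symm (h1.trans h.symm) (h2.trans h.symm))
      (fun j i h h1 h2 => g2 i j h.symm (h2.trans h.symm) (h1.trans h.symm)) j hj j'⟩
  have hfin : (extEdges x y).Finite := by
    refine (Set.finite_range (fun p : ZMod (2 * n) × ZMod (2 * m) => s(x p.1, y p.2))).subset ?_
    rintro e ⟨i, j, rfl⟩
    exact ⟨(i, j), rfl⟩
  have hcol : ∀ w κ, ∃ e, e ∈ extEdges x y ∧ w ∈ e ∧ c e = κ := by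
    intro w κ
    by_contra! hno
    rcases hcov w with ⟨i, rfl⟩ | ⟨j, rfl⟩
    · refine hX i ⟨⟨0, trivial⟩, fun j j' => ?_⟩
      have h1 := hno _ ⟨i, j, rfl⟩ (by simp)
      have h2 := hno _ ⟨i, j', rfl⟩ (by simp)
      rw [Bool.eq_not_of_ne h1, Bool.eq_not_of_ne h2]
    · refine hY j ⟨⟨0, trivial⟩, fun i i' => ?_⟩
      have h1 := hno _ ⟨i, j, rfl⟩ (by simp)
      have h2 := hno _ ⟨i', j, rfl⟩ (by simp)
      rw [Bool.eq_not_of_ne h1, Bool.eq_not_of_ne h2]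
  refine ⟨fun w => ⟨?_, ?_⟩, hX, hY⟩
  · exact (Set.ncard_pos (hfin.subset fun e he => he.1)).2 (hcol w true)
  · exact (Set.ncard_pos (hfin.subset fun e he => he.1)).2 (hcol w false)
end

section
/- Let G_1 and G_2 be two vertex-disjoint 2-edge-colored graphs with Hamiltonian alternating cycles C_1 = x_0 x_1 ⋯ x_{2n−1} x_0 and C_2 = y_0 y_1 ⋯ y_{2m−1} y_0 respectively, and let G ∈ G_1 ⊕ G_2. If there is no good pair in G, and for each i ∈ {1,2} there is a vertex of C_i that is non-singular with respect to C_{3−i}, then there exist r ∈ [0, 2m−1] and s ∈ [0, 2n−1] such that x_0 y_r y_{r+1} y_{r+2} x_0 and y_0 x_s x_{s+1} x_{s+2} y_0 are alternating 4-cycles in G (subscripts modulo 2m and 2n respectively). -/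
theorem zmod_up {N : ℕ} (hN : 0 < N) (P : ZMod N → Prop) (h0 : P 0)
    (h : ∀ i, P i → P (i + 1)) : ∀ i, P i := by
  have : NeZero N := ⟨hN.ne'⟩
  have key : ∀ k : ℕ, P (k : ZMod N) := by
    intro k
    induction k with
    | zero => simpa using h0
    | succ k ih => simpa using h _ ih
  intro i
  simpa using key i.val

theorem zmod_down {N : ℕ} (hN : 0 < N) (P : ZMod N → Prop) (h0 : P 0)
    (h : ∀ i, P (i + 1) → P i) : ∀ i, P i := by
  intro i
  have := zmod_up hN (fun i => P (-i)) (by simpa using h0)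
    (fun i hi => h _ (by simpa using hi)) (-i)
  simpa using this

theorem row_type {m : ℕ} (hm : 0 < m) (b R : ZMod (2 * m) → Bool)
    (hb : ∀ j, b (j + 1) = !b j) (hR : ∀ r, R r ≠ b r → R (r + 2) ≠ b r) :
    (∀ j, R j = true) ∨ (∀ j, R j = false) ∨ (∀ j, R j = b j) ∨ (∀ j, R j = !b j) := by
  have : NeZero (2 * m) := ⟨by omega⟩
  have hb2 : ∀ j, b (j + 2) = b j := by
    intro j
    have : j + 2 = j + 1 + 1 := by ring
    rw [this, hb, hb, Bool.not_not]
  have up : ∀ r, R r ≠ b r → ∀ k : ℕ, R (r + 2 * k) ≠ b (r + 2 * k) := by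
    intro r hr k
    induction k with
    | zero => simpa using hr
    | succ k ih =>
      have e : r + 2 * ((k + 1 : ℕ) : ZMod (2 * m)) = r + 2 * k + 2 := by push_cast; ring
      rw [e, hb2]
      exact hR _ ih
  have stepiff : ∀ r, R (r + 2) ≠ b (r + 2) ↔ R r ≠ b r := by
    intro r
    constructor
    · intro h
      have h1 := up _ h (m - 1)
      have e : r + 2 + 2 * ((m - 1 : ℕ) : ZMod (2 * m)) = r := by
        have : ((2 * m : ℕ) : ZMod (2 * m)) = 0 := ZMod.natCast_self _
        rw [Nat.cast_sub hm]
        push_cast at this ⊢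
        linear_combination this
      rwa [e] at h1
    · intro h
      rw [hb2]; exact hR r h
  have step : ∀ r, R (r + 2) = R r := by
    intro r
    have h1 := stepiff r
    rw [hb2] at h1
    cases h2 : R (r + 2) <;> cases h3 : R r <;> cases h4 : b r <;> simp_all
  have per : ∀ j, (R j = R 0 ∧ b j = b 0 ∧ R (j + 1) = R 1) ∨
      (R j = R 1 ∧ b j = !b 0 ∧ R (j + 1) = R 0) := by
    apply zmod_up (by omega)
    · left; simp
    · rintro i (⟨h1, h2, h3⟩ | ⟨h1, h2, h3⟩)
      · right
        refine ⟨h3, by rw [hb, h2], ?_⟩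
        rw [← h1, ← step i]; congr 1; ring
      · left
        refine ⟨h3, by rw [hb, h2, Bool.not_not], ?_⟩
        rw [← h1, ← step i]; congr 1; ring
  generalize R 0 = p at per
  generalize R 1 = q at per
  generalize b 0 = t at per
  have per' : ∀ j, (R j = p ∧ b j = t) ∨ (R j = q ∧ b j = !t) := by
    intro j; rcases per j with h | h
    · exact Or.inl ⟨h.1, h.2.1⟩
    · exact Or.inr ⟨h.1, h.2.1⟩
  clear per step stepiff up hb2 hR hb
  cases p <;> cases q <;> cases t
  case false.false.false => right; left; intro j; grind
  case false.false.true => right; left; intro j; grind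
  case true.true.false => left; intro j; grind
  case true.true.true => left; intro j; grind
  case false.true.false => right; right; left; intro j; grind
  case false.true.true => right; right; right; intro j; grind
  case true.false.false => right; right; right; intro j; grind
  case true.false.true => right; right; left; intro j; grind

theorem core {n m : ℕ} (hn : 0 < n) (hm : 0 < m)
    (a : ZMod (2 * n) → Bool) (b : ZMod (2 * m) → Bool)
    (A : ZMod (2 * n) → ZMod (2 * m) → Bool)
    (ha : ∀ i, a (i + 1) = !a i) (hb : ∀ j, b (j + 1) = !b j)
    (h1 : ∀ i j, a i = b j → A i j = a i → A (i + 1) (j + 1) ≠ a i)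
    (h2 : ∀ i j, a i = b j → A i (j + 1) = a i → A (i + 1) j ≠ a i)
    (hr : ∃ i j j', A i j ≠ A i j') (hc : ∃ j i i', A i j ≠ A i' j) :
    ∃ r, A 0 r ≠ b r ∧ A 0 (r + 2) = b r := by
  by_contra hcon
  push Not at hcon
  have hN : 0 < 2 * n := by omega
  have pm : ∀ j : ZMod (2 * m), ∃ k, j = k + 1 := fun j => ⟨j - 1, by ring⟩
  have B1 : ∀ p q r : Bool, p ≠ q → q = !r → p = r := by decide
  have const : ∀ κ, (∀ j, A 0 j = κ) → False := by
    intro κ hκ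
    obtain ⟨i, j, j', hne⟩ := hr
    by_cases h0 : a 0 = κ
    · have := zmod_up hN (fun i => ∀ j, A i j = a i) (by intro j; rw [hκ, h0]) (by
        intro i hi j
        have := ha i
        by_cases hij : a i = b j
        · exact Bool.eq_not.2 (h2 i j hij (hi _)) |>.trans this.symm
        · obtain ⟨k, rfl⟩ := pm j
          have := hb k
          exact Bool.eq_not.2 (h1 i k (B1 _ _ _ hij this) (hi _)) |>.trans (ha i).symm)
      exact hne (by rw [this, this])
    · have := zmod_down hN (fun i => ∀ j, A i j = !a i) (by intro j; rw [hκ]; exact Bool.eq_not.2 (Ne.symm h0)) (by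
        intro i hi j
        have := ha i
        by_cases hij : a i = b j
        · exact Bool.eq_not.2 fun e => h1 i j hij e (by rw [hi, ha, Bool.not_not])
        · obtain ⟨k, rfl⟩ := pm j
          have := hb k
          exact Bool.eq_not.2 fun e => h2 i k (B1 _ _ _ hij this) e (by rw [hi, ha, Bool.not_not]))
      exact hne (by rw [this, this])
  obtain ⟨j0, i0, i0', hne⟩ := hc
  rcases row_type hm b (A 0) hb hcon with h | h | h | h
  · exact const _ h
  · exact const _ h
  · have P := zmod_up hN (fun i => ∀ j, b j = a i → A i j = b j) (fun j _ => h j) (by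
      intro i hi j hj
      have := ha i
      obtain ⟨k, rfl⟩ := pm j
      have := hb k
      have e1 := h1 i k; have e2 := hi k
      clear * - this e1 e2 hj ha
      have h3 := ha i
      revert this e1 e2 hj h3
      generalize a i = p, a (i + 1) = q, b k = u, b (k + 1) = v, A i k = z, A (i + 1) (k + 1) = w
      cases p <;> cases q <;> cases u <;> cases v <;> cases z <;> cases w <;> simp)
    have Q := zmod_down hN (fun i => ∀ j, b j = !a i → A i j = b j) (fun j _ => h j) (by
      intro i hi j hj
      have := ha i
      obtain ⟨k, rfl⟩ := pm j
      have := hb k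
      have e1 := h2 i k; have e2 := hi k
      clear * - this e1 e2 hj ha
      have h3 := ha i
      revert this e1 e2 hj h3
      generalize a i = p, a (i + 1) = q, b k = u, b (k + 1) = v, A i (k + 1) = z, A (i + 1) k = w
      cases p <;> cases q <;> cases u <;> cases v <;> cases z <;> cases w <;> simp)
    have all : ∀ i j, A i j = b j := by
      intro i j; 
      by_cases hij : b j = a i
      · exact P i j hij
      · exact Q i j (Bool.eq_not.2 hij)
    exact hne (by rw [all, all])
  · have P := zmod_up hN (fun i => ∀ j, b j = !a i → A i j = !b j) (fun j _ => h j) (by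
      intro i hi j hj
      have := ha i
      have := hb j
      have e1 := h2 i j; have e2 := hi (j + 1)
      clear * - this e1 e2 hj ha
      have h3 := ha i
      revert this e1 e2 hj h3
      generalize a i = p, a (i + 1) = q, b j = u, b (j + 1) = v, A i (j + 1) = z, A (i + 1) j = w
      cases p <;> cases q <;> cases u <;> cases v <;> cases z <;> cases w <;> simp)
    have Q := zmod_down hN (fun i => ∀ j, b j = a i → A i j = !b j) (fun j _ => h j) (by
      intro i hi j hj
      have := ha i
      have := hb j
      have e1 := h1 i j; have e2 := hi (j + 1)
      clear * - this e1 e2 hj ha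
      have h3 := ha i
      revert this e1 e2 hj h3
      generalize a i = p, a (i + 1) = q, b j = u, b (j + 1) = v, A i j = z, A (i + 1) (j + 1) = w
      cases p <;> cases q <;> cases u <;> cases v <;> cases z <;> cases w <;> simp)
    have all : ∀ i j, A i j = !b j := by
      intro i j; 
      by_cases hij : b j = a i
      · exact Q i j hij
      · exact P i j (Bool.eq_not.2 hij)
    exact hne (by rw [all, all])


/-- Let `G ∈ G₁ ⊕ G₂` where `G₁`, `G₂` have Hamiltonian alternating
cycles `C₁ = x` (length `2n`), `C₂ = y` (length `2m`). If `G` has no good pair and each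
`Cᵢ` has a vertex that is non-singular with respect to `C_{3-i}`, then there exist
`r` and `s` such that `x 0, y r, y (r+1), y (r+2), x 0` and
`y 0, x s, x (s+1), x (s+2), y 0` are alternating 4-cycles of `G`. -/
theorem alternating_four_cycles_exist {V : Type*} (G : SimpleGraph V) (c : Sym2 V → Bool)
    {n m : ℕ} (hn : 0 < n) (hm : 0 < m)
    (x : ZMod (2 * n) → V) (y : ZMod (2 * m) → V)
    (hG : IsCGSHam G c x y) (hgp : ¬ HasGoodPair G c x y)
    (hns1 : ∃ i, ¬ SingularX c x y i) (hns2 : ∃ j, ¬ SingularY c x y j) :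
    (∃ r : ZMod (2 * m),
      c s(x 0, y r) ≠ c s(y r, y (r + 1)) ∧
      c s(y r, y (r + 1)) ≠ c s(y (r + 1), y (r + 2)) ∧
      c s(y (r + 1), y (r + 2)) ≠ c s(y (r + 2), x 0) ∧
      c s(y (r + 2), x 0) ≠ c s(x 0, y r)) ∧
    (∃ s : ZMod (2 * n),
      c s(y 0, x s) ≠ c s(x s, x (s + 1)) ∧
      c s(x s, x (s + 1)) ≠ c s(x (s + 1), x (s + 2)) ∧
      c s(x (s + 1), x (s + 2)) ≠ c s(x (s + 2), y 0) ∧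
      c s(x (s + 2), y 0) ≠ c s(y 0, x s)) := by
  obtain ⟨⟨-, -, hx⟩, ⟨-, -, hy⟩, -, -, hadj⟩ := hG
  have e2 : ∀ {N : ℕ} (i : ZMod N), i + 1 + 1 = i + 2 := by intros; ring
  have ha : ∀ i, c s(x (i + 1), x (i + 1 + 1)) = !c s(x i, x (i + 1)) := by
    intro i; rw [e2]; exact Bool.eq_not.2 (hx i).symm
  have hb : ∀ i, c s(y (i + 1), y (i + 1 + 1)) = !c s(y i, y (i + 1)) := by
    intro i; rw [e2]; exact Bool.eq_not.2 (hy i).symm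
  have h1 : ∀ i j, c s(x i, x (i + 1)) = c s(y j, y (j + 1)) →
      c s(x i, y j) = c s(x i, x (i + 1)) →
      c s(x (i + 1), y (j + 1)) ≠ c s(x i, x (i + 1)) := by
    intro i j e f g
    exact hgp ⟨i, i + 1, j, j + 1, Or.inr rfl, Or.inr rfl, hadj _ _, hadj _ _, f.symm,
      g.trans f.symm, by rw [Sym2.eq_swap, ← e, f]⟩
  have h2 : ∀ i j, c s(x i, x (i + 1)) = c s(y j, y (j + 1)) →
      c s(x i, y (j + 1)) = c s(x i, x (i + 1)) →
      c s(x (i + 1), y j) ≠ c s(x i, x (i + 1)) := by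
    intro i j e f g
    exact hgp ⟨i, i + 1, j + 1, j, Or.inr rfl, Or.inl (by ring), hadj _ _, hadj _ _, f.symm,
      g.trans f.symm, by rw [← e, f]⟩
  have hr : ∃ i j j', c s(x i, y j) ≠ c s(x i, y j') := by
    obtain ⟨i, hi⟩ := hns1
    by_contra hcon
    push Not at hcon
    exact hi ⟨⟨0, trivial⟩, hcon i⟩
  have hc : ∃ j i i', c s(x i, y j) ≠ c s(x i', y j) := by
    obtain ⟨j, hj⟩ := hns2
    by_contra hcon
    push Not at hcon
    exact hj ⟨⟨0, trivial⟩, hcon j⟩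
  constructor
  · obtain ⟨r, hr1, hr2⟩ := core hn hm (fun i => c s(x i, x (i + 1)))
      (fun j => c s(y j, y (j + 1))) (fun i j => c s(x i, y j)) ha hb h1 h2 hr hc
    have h3 := hy r
    rw [Sym2.eq_swap (a := x 0) (b := y (r + 2))] at hr2
    exact ⟨r, hr1, h3, by rw [hr2]; exact h3.symm, by rw [hr2]; exact hr1.symm⟩
  · obtain ⟨r, hr1, hr2⟩ := core hm hn (fun j => c s(y j, y (j + 1)))
      (fun i => c s(x i, x (i + 1))) (fun j i => c s(x i, y j)) hb ha
      (fun j i e f => by rw [e] at f ⊢; exact h1 i j e.symm f)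
      (fun j i e f g => by rw [e] at f g; exact h2 i j e.symm g f) hc hr
    have h3 := hx r
    have e : s(y 0, x r) = s(x r, y 0) := Sym2.eq_swap
    rw [← e] at hr1
    exact ⟨r, hr1, h3, by rw [hr2]; exact h3.symm, by rw [hr2]; exact hr1.symm⟩
end

section
/- Let G_1 and G_2 be two vertex-disjoint 2-edge-colored graphs with Hamiltonian alternating cycles C_1 = x_0 x_1 ⋯ x_{2n−1} x_0 and C_2 = y_0 y_1 ⋯ y_{2m−1} y_0 respectively, and let G ∈ G_1 ⊕ G_2. If there is no good pair in G, and for each i ∈ {1,2} there is a vertex of C_i that is non-singular with respect to C_{3−i}, then for each vertex v ∈ V(G) and each even integer l ∈ [4, 4m_1] ∪ [2M_2, 2n+2m], where m_1 = min{n, m} and M_2 = max{n, m}, there is an alternating cycle of length l in G passing through v. -/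
/-- Integer-indexed, normalized version of the configuration. -/
structure Conf {V : Type*} (G : SimpleGraph V) (c : Sym2 V → Bool) (n m : ℕ)
    (X Y : ℤ → V) : Prop where
  hn : 2 ≤ n
  hm : 2 ≤ m
  eqX : ∀ i i', X i = X i' ↔ (2 * n : ℤ) ∣ i' - i
  eqY : ∀ i i', Y i = Y i' ↔ (2 * m : ℤ) ∣ i' - i
  ne : ∀ i j, X i ≠ Y j
  cov : ∀ v, (∃ i, X i = v) ∨ (∃ j, Y j = v)
  adjX : ∀ i, G.Adj (X i) (X (i + 1))
  adjY : ∀ i, G.Adj (Y i) (Y (i + 1))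
  adjXY : ∀ i j, G.Adj (X i) (Y j)
  colX : ∀ i, c s(X i, X (i + 1)) = decide (Even i)
  colY : ∀ i, c s(Y i, Y (i + 1)) = decide (Even i)
  ng1 : ∀ i j, Odd (i + j) → c s(X i, Y j) = decide (Even i) →
    c s(X (i + 1), Y (j - 1)) = decide (Even (i + 1))
  ng2 : ∀ i j, Even (i + j) → c s(X i, Y j) = decide (Even i) →
    c s(X (i + 1), Y (j + 1)) = decide (Even (i + 1))

/-- Build an alternating cycle from a sequence. -/
theorem mk_cycle {V : Type*} (G : SimpleGraph V) (c : Sym2 V → Bool) (l : ℕ) (hl : Even l)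
    (hl2 : 2 ≤ l) (Z : ℕ → V) (s : ℤ)
    (hinj : ∀ a b, a < b → b < l → Z a ≠ Z b)
    (hadj : ∀ a, a + 1 < l → G.Adj (Z a) (Z (a + 1)))
    (hcol : ∀ a : ℕ, a + 1 < l → c s(Z a, Z (a + 1)) = decide (Even (s + a)))
    (hadj' : G.Adj (Z (l - 1)) (Z 0))
    (hcol' : c s(Z (l - 1), Z 0) = decide (Even (s + 1)))
    (v : V) (a : ℕ) (ha : a < l) (hv : Z a = v) :
    ∃ z : ZMod l → V, IsAltCycle G c z ∧ v ∈ Set.range z := by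
  have : NeZero l := ⟨by omega⟩
  have : Fact (1 < l) := ⟨by omega⟩
  have hval : ∀ i : ZMod l, (i.val + 1 < l ∧ (i + 1).val = i.val + 1) ∨
      (i.val = l - 1 ∧ (i + 1).val = 0) := by
    intro i
    have h1 := ZMod.val_lt i
    rw [ZMod.val_add, ZMod.val_one]
    by_cases h : i.val + 1 < l
    · left
      exact ⟨h, Nat.mod_eq_of_lt h⟩
    · right
      have : i.val + 1 = l := by omega
      rw [this]
      simp
      omega
  have key : ∀ i : ZMod l, c s(Z i.val, Z (i + 1).val) = decide (Even (s + i.val)) := by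
    intro i
    rcases hval i with ⟨h1, h2⟩ | ⟨h1, h2⟩
    · rw [h2]; exact hcol _ h1
    · rw [h1, h2, hcol']
      congr 1
      have : ((l - 1 : ℕ) : ℤ) = l - 1 := by omega
      rw [this]
      grind
  refine ⟨fun i => Z i.val, ⟨?_, ?_, ?_⟩, ⟨(a : ZMod l), ?_⟩⟩
  · intro i j hij
    by_contra hne
    have hne' : i.val ≠ j.val := fun h => hne (ZMod.val_injective l h)
    rcases lt_or_gt_of_ne hne' with h | h
    · exact hinj _ _ h (ZMod.val_lt j) hij
    · exact hinj _ _ h (ZMod.val_lt i) hij.symm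
  · intro i
    rcases hval i with ⟨h1, h2⟩ | ⟨h1, h2⟩
    · simp only [h2]; exact hadj _ h1
    · simp only [h2, h1]; exact hadj'
  · intro i
    have h12 : i + 2 = (i + 1) + 1 := by ring
    simp only [h12]
    rw [key, key]
    rcases hval i with ⟨h1, h2⟩ | ⟨h1, h2⟩
    · rw [h2]; push_cast; grind
    · rw [h1, h2]
      have : ((l - 1 : ℕ) : ℤ) = l - 1 := by omega
      rw [this]
      grind
  · simp only [ZMod.val_natCast, Nat.mod_eq_of_lt ha]
    exact hv

namespace Conf

variable {V : Type*} {G : SimpleGraph V} {c : Sym2 V → Bool} {n m : ℕ} {X Y : ℤ → V}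

theorem rev (h : Conf G c n m X Y) : Conf G c n m X (fun j => Y (1 - j)) where
  hn := h.hn
  hm := h.hm
  eqX := h.eqX
  eqY := by
    intro i i'
    rw [h.eqY, ← dvd_neg]
    have : -(1 - i' - (1 - i)) = i' - i := by ring
    rw [this]
  ne := fun i j => h.ne _ _
  cov := by
    intro v
    rcases h.cov v with h1 | ⟨j, h1⟩
    · exact Or.inl h1
    · exact Or.inr ⟨1 - j, by simpa using h1⟩
  adjX := h.adjX
  adjY := by
    intro i
    have := h.adjY (1 - (i + 1))
    have h2 : 1 - (i + 1) + 1 = 1 - i := by ring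
    rw [h2] at this
    exact this.symm
  adjXY := fun i j => h.adjXY _ _
  colX := h.colX
  colY := by
    intro i
    have := h.colY (1 - (i + 1))
    have h2 : 1 - (i + 1) + 1 = 1 - i := by ring
    rw [h2] at this
    rw [Sym2.eq_swap, this]
    grind
  ng1 := by
    intro i j hij hc
    have := h.ng2 i (1 - j) (by grind) hc
    have h2 : 1 - (j - 1) = 1 - j + 1 := by ring
    simp only [h2]
    exact this
  ng2 := by
    intro i j hij hc
    have := h.ng1 i (1 - j) (by grind) hc
    have h2 : 1 - (j + 1) = 1 - j - 1 := by ring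
    simp only [h2]
    exact this

theorem X_per (h : Conf G c n m X Y) (i k : ℤ) : X (i + 2 * n * k) = X i := by
  rw [h.eqX]
  exact ⟨-k, by ring⟩

theorem Y_per (h : Conf G c n m X Y) (i k : ℤ) : Y (i + 2 * m * k) = Y i := by
  rw [h.eqY]
  exact ⟨-k, by ring⟩

theorem X_ne (h : Conf G c n m X Y) (i j : ℤ) (h1 : i < j) (h2 : j - i < 2 * n) : X i ≠ X j := by
  intro he
  rw [h.eqX] at he
  have := Int.le_of_dvd (by omega) he
  omega

theorem Y_ne (h : Conf G c n m X Y) (i j : ℤ) (h1 : i < j) (h2 : j - i < 2 * m) : Y i ≠ Y j := by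
  intro he
  rw [h.eqY] at he
  have := Int.le_of_dvd (by omega) he
  omega

theorem step (h : Conf G c n m X Y) (i j : ℤ) (k : ℕ) (ho : Odd (i + j))
    (hc : c s(X i, Y j) = decide (Even i)) :
    c s(X (i + k), Y (j - k)) = decide (Even (i + k)) := by
  induction k with
  | zero => simpa using hc
  | succ k ih =>
    have := h.ng1 (i + k) (j - k) (by grind) ih
    push_cast
    rw [← add_assoc, ← sub_sub]
    exact this

theorem step' (h : Conf G c n m X Y) (i j k : ℤ) (ho : Odd (i + j))
    (hc : c s(X i, Y j) = decide (Even i)) :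
    c s(X (i + k), Y (j - k)) = decide (Even (i + k)) := by
  have hn := h.hn
  have hm := h.hm
  have hpos : (1 : ℤ) ≤ 2 * n * (2 * m) := by
    have : (1 : ℕ) ≤ 2 * n * (2 * m) := Nat.one_le_iff_ne_zero.mpr (by positivity)
    exact_mod_cast this
  have hk : 0 ≤ k + 2 * n * (2 * m) * |k| := by
    have h1 := neg_abs_le k
    have h2 := abs_nonneg k
    nlinarith
  obtain ⟨K, hK⟩ := Int.eq_ofNat_of_zero_le hk
  have := h.step i j K ho hc
  rw [← hK] at this
  have e1 : i + (k + 2 * n * (2 * m) * |k|) = (i + k) + 2 * n * (2 * m * |k|) := by ring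
  have e2 : j - (k + 2 * n * (2 * m) * |k|) = (j - k) + 2 * m * (-(2 * n * |k|)) := by ring
  rw [e2, h.Y_per, e1, h.X_per] at this
  rw [this]
  grind

theorem odd_iff (h : Conf G c n m X Y) (i j : ℤ) (ho : Odd (i + j)) :
    c s(X i, Y j) = decide (Even i) ↔ c s(X 0, Y (i + j)) = true := by
  constructor
  · intro hc
    have := h.step' i j (-i) ho hc
    have e : j - -i = i + j := by ring
    rw [e] at this
    simpa using this
  · intro hc
    have := h.step' 0 (i + j) i (by simpa using ho) (by simpa using hc)
    simpa using this

/-- color of an odd edge when the invariant is true -/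
theorem colT (h : Conf G c n m X Y) (i j : ℤ) (ho : Odd (i + j))
    (hc : c s(X 0, Y (i + j)) = true) : c s(X i, Y j) = decide (Even i) :=
  (h.odd_iff i j ho).2 hc

theorem colF (h : Conf G c n m X Y) (i j : ℤ) (ho : Odd (i + j))
    (hc : c s(X 0, Y (i + j)) = false) : c s(X i, Y j) = decide (Even j) := by
  have := (h.odd_iff i j ho).not.2 (by simp [hc])
  have e : decide (Even j) = !decide (Even i) := by grind
  rw [e]
  revert this
  cases c s(X i, Y j) <;> cases decide (Even i) <;> simp

theorem f_perY (_h : Conf G c n m X Y) (t k : ℤ) :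
    c s(X 0, Y (t + 2 * m * k)) = c s(X 0, Y t) := by
  rw [_h.Y_per]

theorem f_perX (h : Conf G c n m X Y) (t k : ℤ) (ht : Odd t) :
    c s(X 0, Y (t + 2 * n * k)) = c s(X 0, Y t) := by
  have h1 := h.odd_iff (2 * n * k) t (by grind)
  have h2 : X (2 * n * k) = X 0 := by simpa using h.X_per 0 k
  have h3 : Even (2 * n * k : ℤ) := by grind
  rw [h2, decide_eq_true h3, add_comm] at h1
  rw [Bool.eq_iff_iff]
  exact h1.symm

theorem exists_down (h : Conf G c n m X Y) (p q : ℤ) (hp : Odd p) (hq : Odd q)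
    (b : Bool) (h1 : c s(X 0, Y p) = b) (h2 : c s(X 0, Y q) = !b) :
    ∃ a, Odd a ∧ c s(X 0, Y a) = b ∧ c s(X 0, Y (a + 2)) = !b := by
  by_contra hcon
  push Not at hcon
  have hprop : ∀ k : ℕ, c s(X 0, Y (p + 2 * k)) = b := by
    intro k
    induction k with
    | zero => simpa using h1
    | succ k ih =>
      have := hcon (p + 2 * k) (by grind) ih
      push_cast
      have e : p + 2 * ((k : ℤ) + 1) = p + 2 * k + 2 := by ring
      rw [e]
      revert this
      cases c s(X 0, Y (p + 2 * k + 2)) <;> cases b <;> simp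
  have hm := h.hm
  have hm' : (1 : ℤ) ≤ m := by omega
  obtain ⟨r, hr⟩ : ∃ r, q - p = 2 * r := by
    have : Even (q - p) := by grind
    obtain ⟨r, hr⟩ := this
    exact ⟨r, by omega⟩
  have hk : 0 ≤ r + m * |r| := by
    have h1 := neg_abs_le r
    have h2 := abs_nonneg r
    nlinarith
  obtain ⟨K, hK⟩ := Int.eq_ofNat_of_zero_le hk
  have h3 := hprop K
  rw [← hK] at h3
  have e : p + 2 * (r + m * |r|) = q + 2 * m * |r| := by
    have : q = p + 2 * r := by omega
    rw [this]; ring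
  rw [e, h.Y_per, h2] at h3
  cases b <;> simp at h3

/-- Cycles with two segments. -/
theorem seg2 (h : Conf G c n m X Y) (k k' : ℕ) (hk : k < 2 * n) (hk' : k' < 2 * m)
    (t : ℤ) (ht : Odd t) (hev : Even (k + k')) (h1 : c s(X 0, Y t) = true)
    (h0 : c s(X 0, Y (t - k + k')) = false) (v : V) :
    ∃ z : ZMod (k + k' + 2) → V, IsAltCycle G c z ∧ v ∈ Set.range z := by
  have hev' : Even ((k : ℤ) + k') := by exact_mod_cast hev
  have main : ∀ i : ℤ, ∀ a : ℕ, a < k + k' + 2 →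
      (if a ≤ k then X (i + a) else Y (t - i - k + (a - k - 1))) = v →
      ∃ z : ZMod (k + k' + 2) → V, IsAltCycle G c z ∧ v ∈ Set.range z := by
    intro i a ha hv
    refine mk_cycle G c (k + k' + 2) (by grind) (by omega)
      (fun a => if a ≤ k then X (i + a) else Y (t - i - k + (a - k - 1))) i ?_ ?_ ?_ ?_ ?_ v a ha hv
    · intro a b hab hb
      split_ifs with h1 h2 h2
      · exact h.X_ne _ _ (by omega) (by omega)
      · exact h.ne _ _
      · omega
      · exact h.Y_ne _ _ (by omega) (by omega)
    · intro a ha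
      split_ifs with h1 h2 h2
      · convert h.adjX (i + a) using 2
        push_cast; ring
      · exact h.adjXY _ _
      · omega
      · convert h.adjY (t - i - k + (a - k - 1)) using 2
        push_cast; ring
    · intro a ha
      split_ifs with g1 g2 g2
      · rw [← h.colX (i + a)]
        push_cast
        rw [add_assoc]
      · have : a = k := by omega
        subst this
        apply h.colT
        · push_cast
          ring_nf
          exact ht
        · push_cast
          ring_nf
          ring_nf at h1
          exact h1
      · omega
      · have e := h.colY (t - i - k + (a - k - 1))
        have e2 : t - i - k + (((a + 1 : ℕ) : ℤ) - k - 1) = t - i - k + (a - k - 1) + 1 := by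
          push_cast; ring
        rw [e2, e]
        grind
    · rw [if_neg (by omega), if_pos (by omega)]
      exact (h.adjXY _ _).symm
    · rw [if_neg (by omega), if_pos (by omega), Sym2.eq_swap]
      have e : t - i - k + (((k + k' + 2 - 1 : ℕ) : ℤ) - k - 1) = t - i - k + k' := by
        have : ((k + k' + 2 - 1 : ℕ) : ℤ) = k + k' + 1 := by omega
        rw [this]; ring
      rw [e]
      have e3 : i + ((0 : ℕ) : ℤ) + (t - i - k + k') = t - k + k' := by push_cast; ring
      rw [h.colF]
      · grind
      · rw [e3]; grind
      · rw [e3]; exact h0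
  rcases h.cov v with ⟨a, ha⟩ | ⟨b, hb⟩
  · exact main a 0 (by omega) (by simpa using ha)
  · refine main (t - k - b) (k + 1) (by omega) ?_
    rw [if_neg (by omega), ← hb]
    congr 1
    push_cast; ring

/-- The Hamiltonian cycle. -/
theorem ham (h : Conf G c n m X Y) (u : ℕ) (hu : 0 < u) (hu' : u < 2 * n) (hue : Even u)
    (t : ℤ) (ht : Odd t) (h1 : c s(X 0, Y t) = true) (h2 : c s(X 0, Y (t + 2)) = false)
    (h3 : c s(X 0, Y (t - u)) = false) (h4 : c s(X 0, Y (t - u + 2)) = true) (v : V) :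
    ∃ z : ZMod (2 * n + 2 * m) → V, IsAltCycle G c z ∧ v ∈ Set.range z := by
  have hn := h.hn
  have hm := h.hm
  have hue' : Even (u : ℤ) := by exact_mod_cast hue
  have main : ∀ i j : ℤ, i + u - 1 + j = t → ∀ a : ℕ, a < 2 * n + 2 * m →
      (if a < u then X (i + a) else if a < u + 2 then Y (j + (a - u)) else
        if a < 2 * n + 2 then X (i + (a - 2)) else Y (j + (a - 2 * n))) = v →
      ∃ z : ZMod (2 * n + 2 * m) → V, IsAltCycle G c z ∧ v ∈ Set.range z := by
    intro i j hij a ha hv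
    refine mk_cycle G c (2 * n + 2 * m) (by grind) (by omega)
      (fun a : ℕ => if a < u then X (i + a) else if a < u + 2 then Y (j + (a - u)) else
        if a < 2 * n + 2 then X (i + (a - 2)) else Y (j + (a - 2 * n)))
      i ?_ ?_ ?_ ?_ ?_ v a ha hv
    · intro a b hab hb
      split_ifs <;> first
        | omega
        | exact h.ne _ _
        | exact (h.ne _ _).symm
        | exact h.X_ne _ _ (by omega) (by omega)
        | exact h.Y_ne _ _ (by omega) (by omega)
    · intro a ha
      have adX : ∀ p q : ℤ, q = p + 1 → G.Adj (X p) (X q) := by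
        intro p q hq
        rw [hq]; exact h.adjX p
      have adY : ∀ p q : ℤ, q = p + 1 → G.Adj (Y p) (Y q) := by
        intro p q hq
        rw [hq]; exact h.adjY p
      split_ifs <;> first
        | omega
        | exact h.adjXY _ _
        | exact (h.adjXY _ _).symm
        | exact adX _ _ (by push_cast; ring)
        | exact adY _ _ (by push_cast; ring)
    · intro a ha
      have addX : ∀ p q : ℤ, q = p + 1 → Even p = Even (i + a) →
          c s(X p, X q) = decide (Even (i + a)) := by
        intro p q hq hp
        rw [hq, h.colX]
        simp only [hp]
      have addY : ∀ p q : ℤ, q = p + 1 → Even p = Even (i + a) →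
          c s(Y p, Y q) = decide (Even (i + a)) := by
        intro p q hq hp
        rw [hq, h.colY]
        simp only [hp]
      split_ifs with g1 g2 g3 g4 g5 g6 g7 g8 g9
      all_goals try omega
      · exact addX _ _ (by push_cast; ring) rfl
      · have e : i + a + (j + (((a + 1 : ℕ) : ℤ) - u)) = t := by push_cast; omega
        exact h.colT _ _ (by rw [e]; exact ht) (by rw [e]; exact h1)
      · exact addY _ _ (by push_cast; ring) (by grind)
      · have e : i + (((a + 1 : ℕ) : ℤ) - 2) + (j + (a - u)) = t + 2 := by push_cast; omega
        rw [Sym2.eq_swap, h.colF _ _ (by rw [e]; grind) (by rw [e]; exact h2)]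
        grind
      · exact addX _ _ (by push_cast; ring) (by grind)
      · have e : i + ((a : ℤ) - 2) + (j + (((a + 1 : ℕ) : ℤ) - 2 * n)) = t - u + 2 + 2 * n * 1 := by
          push_cast; omega
        have o : Odd (t - u + 2) := by grind
        rw [h.colT _ _ (by rw [e]; grind) (by rw [e, h.f_perX _ _ o]; exact h4)]
        grind
      · exact addY _ _ (by push_cast; ring) (by grind)
    · rw [if_neg (by omega), if_neg (by omega), if_neg (by omega), if_pos (by omega)]
      exact (h.adjXY _ _).symm
    · rw [if_neg (by omega), if_neg (by omega), if_neg (by omega), if_pos (by omega),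
        Sym2.eq_swap]
      have e : i + ((0 : ℕ) : ℤ) + (j + (((2 * n + 2 * m - 1 : ℕ) : ℤ) - 2 * n))
          = t - u + 2 * m * 1 := by omega
      rw [h.colF _ _ (by rw [e]; grind) (by rw [e, h.f_perY]; exact h3)]
      have : ((2 * n + 2 * m - 1 : ℕ) : ℤ) = 2 * n + 2 * m - 1 := by omega
      rw [this]
      grind
  rcases h.cov v with ⟨a, ha⟩ | ⟨b, hb⟩
  · refine main a (t + 1 - u - a) (by ring) 0 (by omega) ?_
    rw [if_pos hu]
    simpa using ha
  · refine main (t + 1 - u - b) b (by ring) u (by omega) ?_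
    rw [if_neg (by omega), if_pos (by omega)]
    simpa using hb

theorem core (h : Conf G c n m X Y)
    (hnc : ∃ p q, Odd p ∧ Odd q ∧ c s(X 0, Y p) = true ∧ c s(X 0, Y q) = false)
    (v : V) (l : ℕ) (hl : Even l)
    (hr : (4 ≤ l ∧ l ≤ 4 * min n m) ∨ (2 * max n m ≤ l ∧ l ≤ 2 * n + 2 * m)) :
    ∃ z : ZMod l → V, IsAltCycle G c z ∧ v ∈ Set.range z := by
  have hn := h.hn
  have hm := h.hm
  obtain ⟨p, q, hp, hq, h1, h2⟩ := hnc
  obtain ⟨a, ha, ha1, ha2⟩ := h.exists_down p q hp hq true h1 h2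
  obtain ⟨b, hb, hb1, hb2⟩ := h.exists_down q p hq hp false h2 h1
  simp only [Bool.not_true, Bool.not_false] at ha2 hb2
  obtain ⟨L, hL⟩ := hl
  by_cases hham : l = 2 * n + 2 * m
  · subst hham
    have hpos : (0 : ℤ) < 2 * n := by omega
    have hu0 := Int.emod_nonneg (a - b) hpos.ne'
    have hu1 := Int.emod_lt_of_pos (a - b) hpos
    have hdm := Int.emod_add_mul_ediv (a - b) (2 * n)
    obtain ⟨u, hu⟩ := Int.eq_ofNat_of_zero_le hu0
    rw [hu] at hdm hu1
    set K := (a - b) / (2 * n : ℤ) with hK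
    have eb : a - u = b + 2 * n * K := by linarith
    have eb2 : a - u + 2 = b + 2 + 2 * n * K := by linarith
    have hf : c s(X 0, Y (a - u)) = false := by rw [eb, h.f_perX _ _ hb, hb1]
    have hev : Even (u : ℤ) := by
      have : (u : ℤ) = a - b - 2 * (n * K) := by linarith
      rw [this]; grind
    refine h.ham u ?_ (by omega) (by exact_mod_cast hev) a ha ha1 ha2 hf ?_ v
    · rcases Nat.eq_zero_or_pos u with h0 | h0
      · subst h0
        simp [ha1] at hf
      · exact h0
    · rw [eb2, h.f_perX _ _ (by grind), hb2]
  · by_cases hlow : l ≤ 4 * min n m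
    · by_cases hnm : n ≤ m
      · have hlt : L - 2 < 2 * n := by omega
        have hlt' : L < 2 * m := by omega
        have := h.seg2 (L - 2) L hlt hlt' a ha (by grind) ha1 (by
          have : ((L - 2 : ℕ) : ℤ) = L - 2 := by omega
          rw [this, ← ha2]; congr 3; ring) v
        have e : L - 2 + L + 2 = l := by omega
        rw [e] at this
        exact this
      · have hlt : L - 2 < 2 * m := by omega
        have hlt' : L < 2 * n := by omega
        have := h.seg2 L (L - 2) hlt' hlt (b + 2) (by grind) (by grind) hb2 (by
          have : ((L - 2 : ℕ) : ℤ) = L - 2 := by omega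
          rw [this, ← hb1]; congr 3; ring) v
        have e : L + (L - 2) + 2 = l := by omega
        rw [e] at this
        exact this
    · obtain ⟨r, hrr⟩ : ∃ r, l + 2 * r = 2 * n + 2 * m := ⟨n + m - L, by omega⟩
      have := h.seg2 (2 * n - 2 - r) (2 * m - r) (by omega) (by omega) a ha (by
        have : 2 * n - 2 - r + (2 * m - r) + 2 * (r + 1) = 2 * (n + m) := by omega
        grind) ha1 (by
          have e1 : ((2 * n - 2 - r : ℕ) : ℤ) = 2 * n - 2 - r := by omega
          have e2 : ((2 * m - r : ℕ) : ℤ) = 2 * m - r := by omega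
          rw [e1, e2]
          have e3 : a - (2 * n - 2 - r) + (2 * m - r) = (a + 2 + 2 * n * (-1)) + 2 * m * 1 := by
            ring
          rw [e3, h.f_perY, h.f_perX _ _ (by grind), ha2]) v
      have e : 2 * n - 2 - r + (2 * m - r) + 2 = l := by omega
      rw [e] at this
      exact this

end Conf

theorem two_le_of_alt {V : Type*} (G : SimpleGraph V) (c : Sym2 V → Bool)
    {n : ℕ} (hn : 0 < n) (x : ZMod (2 * n) → V) (hx : IsAltCycle G c x) : 2 ≤ n := by
  by_contra hlt
  have : n = 1 := by omega
  subst this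
  apply hx.2.2 0
  have e1 : (0 + 2 : ZMod (2 * 1)) = 0 := by decide
  have e2 : (0 + 1 : ZMod (2 * 1)) = 1 := by decide
  rw [e1, e2, Sym2.eq_swap]

/-- Integer parametrisation of an alternating cycle, normalized. -/
theorem exists_lift {V : Type*} (G : SimpleGraph V) (c : Sym2 V → Bool)
    {n : ℕ} (x : ZMod (2 * n) → V) (hx : IsAltCycle G c x) :
    ∃ d : ℤ, ∀ i : ℤ, c s(x ((i + d : ℤ) : ZMod (2 * n)), x ((i + 1 + d : ℤ) : ZMod (2 * n)))
      = decide (Even i) := by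
  have hs : ∀ i : ℤ, c s(x ((i + 1 : ℤ) : ZMod (2 * n)), x ((i + 2 : ℤ) : ZMod (2 * n))) =
      !c s(x (i : ZMod (2 * n)), x ((i + 1 : ℤ) : ZMod (2 * n))) := by
    intro i
    have := hx.2.2 (i : ZMod (2 * n))
    push_cast
    revert this
    cases c s(x (i : ZMod (2 * n)), x ((i : ZMod (2 * n)) + 1)) <;>
      cases c s(x ((i : ZMod (2 * n)) + 1), x ((i : ZMod (2 * n)) + 2)) <;> simp
  have all : ∀ d : ℤ, c s(x ((0 + d : ℤ) : ZMod (2 * n)), x ((0 + 1 + d : ℤ) : ZMod (2 * n))) = true →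
      ∀ i : ℤ, c s(x ((i + d : ℤ) : ZMod (2 * n)), x ((i + 1 + d : ℤ) : ZMod (2 * n)))
        = decide (Even i) := by
    intro d h0 i
    induction i using Int.induction_on with
    | zero => simpa using h0
    | succ k ih =>
      have := hs (k + d)
      have e1 : (k : ℤ) + d + 1 = k + 1 + d := by ring
      have e2 : (k : ℤ) + d + 2 = k + 1 + 1 + d := by ring
      rw [e1, e2, ih] at this
      rw [this]
      grind
    | pred k ih =>
      have := hs (-k - 1 + d)
      have e1 : -(k : ℤ) - 1 + d + 1 = -k + d := by ring
      have e2 : -(k : ℤ) - 1 + d + 2 = -k + 1 + d := by ring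
      have e3 : -(k : ℤ) - 1 + 1 + d = -k + d := by ring
      rw [e1, e2, ih] at this
      rw [e3]
      have h5 : c s(x ((-k - 1 + d : ℤ) : ZMod (2 * n)), x ((-k + d : ℤ) : ZMod (2 * n))) =
          !decide (Even (-(k : ℤ))) := by rw [this]; simp
      rw [h5]
      grind
  by_cases h0 : c s(x ((0 + 0 : ℤ) : ZMod (2 * n)), x ((0 + 1 + 0 : ℤ) : ZMod (2 * n))) = true
  · exact ⟨0, all 0 h0⟩
  · refine ⟨1, all 1 ?_⟩
    have := hs 0
    simp only [zero_add, add_zero] at this h0 ⊢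
    rw [Bool.not_eq_true] at h0
    rw [Int.cast_zero] at h0 this
    rw [h0] at this
    exact this

theorem exists_conf {V : Type*} (G : SimpleGraph V) (c : Sym2 V → Bool)
    {n m : ℕ} (hn : 0 < n) (hm : 0 < m)
    (x : ZMod (2 * n) → V) (y : ZMod (2 * m) → V)
    (hG : IsCGSHam G c x y) (hgp : ¬ HasGoodPair G c x y)
    (hns1 : ∃ i, ¬ SingularX c x y i) (hns2 : ∃ j, ¬ SingularY c x y j) :
    ∃ X Y : ℤ → V, Conf G c n m X Y ∧
      ((∃ p q, Odd p ∧ Odd q ∧ c s(X 0, Y p) = true ∧ c s(X 0, Y q) = false) ∨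
       (∃ p q, Even p ∧ Even q ∧ c s(X 0, Y p) = true ∧ c s(X 0, Y q) = false)) := by
  obtain ⟨hx, hy, hdis, hcov, hadj⟩ := hG
  obtain ⟨d, hd⟩ := exists_lift G c x hx
  obtain ⟨e, he⟩ := exists_lift G c y hy
  obtain ⟨X, hX⟩ : ∃ X : ℤ → V, ∀ i, X i = x ((i + d : ℤ) : ZMod (2 * n)) := ⟨_, fun _ => rfl⟩
  obtain ⟨Y, hY⟩ : ∃ Y : ℤ → V, ∀ i, Y i = y ((i + e : ℤ) : ZMod (2 * m)) := ⟨_, fun _ => rfl⟩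
  have sX : ∀ a, ∃ i, X i = x a := by
    intro a
    obtain ⟨k, hk⟩ := ZMod.intCast_surjective a
    exact ⟨k - d, by rw [hX, sub_add_cancel, hk]⟩
  have sY : ∀ a, ∃ i, Y i = y a := by
    intro a
    obtain ⟨k, hk⟩ := ZMod.intCast_surjective a
    exact ⟨k - e, by rw [hY, sub_add_cancel, hk]⟩
  have cX : ∀ i, c s(X i, X (i + 1)) = decide (Even i) := by
    intro i; rw [hX, hX]; exact hd i
  have cY : ∀ i, c s(Y i, Y (i + 1)) = decide (Even i) := by
    intro i; rw [hY, hY]; exact he i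
  have flip : ∀ (b : Bool) (i : ℤ), ¬ (b = decide (Even i)) → b = decide (Even (i + 1)) := by
    intro b i hb
    have : decide (Even (i + 1)) = !decide (Even i) := by grind
    rw [this]
    revert hb
    cases b <;> cases decide (Even i) <;> simp
  have hC : Conf G c n m X Y := by
    refine
      { hn := two_le_of_alt G c hn x hx
        hm := two_le_of_alt G c hm y hy
        eqX := ?_, eqY := ?_, ne := ?_, cov := ?_, adjX := ?_, adjY := ?_, adjXY := ?_
        colX := cX, colY := cY, ng1 := ?_, ng2 := ?_ }
    · intro i i'
      rw [hX, hX, hx.1.eq_iff, ZMod.intCast_eq_intCast_iff_dvd_sub]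
      push_cast
      rw [add_sub_add_right_eq_sub]
    · intro i i'
      rw [hY, hY, hy.1.eq_iff, ZMod.intCast_eq_intCast_iff_dvd_sub]
      push_cast
      rw [add_sub_add_right_eq_sub]
    · intro i j h
      rw [hX, hY] at h
      exact Set.disjoint_left.1 hdis ⟨_, rfl⟩ ⟨_, h.symm⟩
    · intro v
      rcases hcov v with ⟨a, ha⟩ | ⟨a, ha⟩
      · left; rw [← ha]; exact sX a
      · right; rw [← ha]; exact sY a
    · intro i
      rw [hX, hX]
      convert hx.2.1 ((i + d : ℤ) : ZMod (2 * n)) using 2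
      push_cast; ring
    · intro i
      rw [hY, hY]
      convert hy.2.1 ((i + e : ℤ) : ZMod (2 * m)) using 2
      push_cast; ring
    · intro i j
      rw [hX, hY]; exact hadj _ _
    · intro i j hij hc
      apply flip
      intro hc'
      apply hgp
      have h3 : c s(Y (j - 1), Y j) = decide (Even i) := by
        have := cY (j - 1)
        rw [sub_add_cancel] at this
        rw [this]; grind
      have h4 := cX i
      refine ⟨((i + d : ℤ) : ZMod (2 * n)), ((i + 1 + d : ℤ) : ZMod (2 * n)),
        ((j + e : ℤ) : ZMod (2 * m)), ((j - 1 + e : ℤ) : ZMod (2 * m)),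
        Or.inr ?_, Or.inl ?_, hadj _ _, hadj _ _, ?_, ?_, ?_⟩
      · push_cast; ring
      · push_cast; ring
      · rw [← hX, ← hX, ← hY, h4, hc]
      · rw [← hX, ← hX, ← hY, ← hY, hc', hc]
      · rw [← hX, ← hY, ← hY, h3, hc]
    · intro i j hij hc
      apply flip
      intro hc'
      apply hgp
      have h3 : c s(Y (j + 1), Y j) = decide (Even i) := by
        rw [Sym2.eq_swap, cY j]; grind
      have h4 := cX i
      refine ⟨((i + d : ℤ) : ZMod (2 * n)), ((i + 1 + d : ℤ) : ZMod (2 * n)),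
        ((j + e : ℤ) : ZMod (2 * m)), ((j + 1 + e : ℤ) : ZMod (2 * m)),
        Or.inr ?_, Or.inr ?_, hadj _ _, hadj _ _, ?_, ?_, ?_⟩
      · push_cast; ring
      · push_cast; ring
      · rw [← hX, ← hX, ← hY, h4, hc]
      · rw [← hX, ← hX, ← hY, ← hY, hc', hc]
      · rw [← hX, ← hY, ← hY, h3, hc]
  refine ⟨X, Y, hC, ?_⟩
  by_contra hcon
  rw [not_or] at hcon
  obtain ⟨hc1, hc2⟩ := hcon
  have k1 : ∀ p, Odd p → c s(X 0, Y p) = c s(X 0, Y 1) := by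
    intro p hp
    by_contra hne
    apply hc1
    cases h1 : c s(X 0, Y p) <;> cases h2 : c s(X 0, Y 1)
    · simp [h1, h2] at hne
    · exact ⟨1, p, by decide, hp, h2, h1⟩
    · exact ⟨p, 1, hp, by decide, h1, h2⟩
    · simp [h1, h2] at hne
  have k2 : ∀ p, Even p → c s(X 0, Y p) = c s(X 0, Y 0) := by
    intro p hp
    by_contra hne
    apply hc2
    cases h1 : c s(X 0, Y p) <;> cases h2 : c s(X 0, Y 0)
    · simp [h1, h2] at hne
    · exact ⟨0, p, by decide, hp, h2, h1⟩
    · exact ⟨p, 0, hp, by decide, h1, h2⟩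
    · simp [h1, h2] at hne
  have q1 : ∀ i j, Odd (i + j) → c s(X i, Y j) = (decide (Even i) == c s(X 0, Y 1)) := by
    intro i j ho
    have := hC.odd_iff i j ho
    rw [k1 _ ho] at this
    revert this
    cases c s(X i, Y j) <;> cases decide (Even i) <;> cases c s(X 0, Y 1) <;> simp
  have q2 : ∀ i j, Even (i + j) → c s(X i, Y j) = (decide (Even i) == c s(X 0, Y 0)) := by
    intro i j ho
    have := hC.rev.odd_iff i (1 - j) (by grind)
    simp only [sub_sub_cancel] at this
    rw [k2 _ (by grind)] at this
    revert this
    cases c s(X i, Y j) <;> cases decide (Even i) <;> cases c s(X 0, Y 0) <;> simp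
  by_cases hab : c s(X 0, Y 0) = c s(X 0, Y 1)
  · obtain ⟨a, ha⟩ := hns1
    apply ha
    obtain ⟨i, hi⟩ := sX a
    have : ∀ b, c s(x a, y b) = (decide (Even i) == c s(X 0, Y 1)) := by
      intro b
      obtain ⟨j, hj⟩ := sY b
      rw [← hi, ← hj]
      rcases Int.even_or_odd (i + j) with h | h
      · rw [q2 _ _ h, hab]
      · rw [q1 _ _ h]
    exact ⟨⟨0, trivial⟩, fun j j' => by rw [this, this]⟩
  · obtain ⟨b, hb⟩ := hns2
    apply hb
    obtain ⟨j, hj⟩ := sY b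
    have hab' : c s(X 0, Y 1) = !c s(X 0, Y 0) := by
      revert hab
      cases c s(X 0, Y 0) <;> cases c s(X 0, Y 1) <;> simp
    have : ∀ a, c s(x a, y b) = (decide (Even j) == c s(X 0, Y 0)) := by
      intro a
      obtain ⟨i, hi⟩ := sX a
      rw [← hi, ← hj]
      rcases Int.even_or_odd (i + j) with h | h
      · rw [q2 _ _ h]
        have : decide (Even i) = decide (Even j) := by grind
        rw [this]
      · rw [q1 _ _ h, hab']
        have : decide (Even i) = !decide (Even j) := by grind
        rw [this]
        cases decide (Even j) <;> cases c s(X 0, Y 0) <;> rfl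
    exact ⟨⟨0, trivial⟩, fun j j' => by rw [this, this]⟩

/-- Let `G ∈ G₁ ⊕ G₂` where `G₁`, `G₂` have Hamiltonian alternating
cycles `C₁ = x` (length `2n`), `C₂ = y` (length `2m`). If `G` has no good pair and each
`Cᵢ` has a vertex that is non-singular with respect to `C_{3-i}`, then for each vertex
`v` of `G` and each even `l ∈ [4, 4·min n m] ∪ [2·max n m, 2n + 2m]` there is an
alternating cycle of length `l` in `G` passing through `v`. -/
theorem alt_cycles_short_and_long {V : Type*} (G : SimpleGraph V) (c : Sym2 V → Bool)
    {n m : ℕ} (hn : 0 < n) (hm : 0 < m)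
    (x : ZMod (2 * n) → V) (y : ZMod (2 * m) → V)
    (hG : IsCGSHam G c x y) (hgp : ¬ HasGoodPair G c x y)
    (hns1 : ∃ i, ¬ SingularX c x y i) (hns2 : ∃ j, ¬ SingularY c x y j) :
    ∀ v : V, ∀ l : ℕ, Even l →
      ((4 ≤ l ∧ l ≤ 4 * min n m) ∨ (2 * max n m ≤ l ∧ l ≤ 2 * n + 2 * m)) →
      ∃ z : ZMod l → V, IsAltCycle G c z ∧ v ∈ Set.range z := by
  intro v l hl hrange
  obtain ⟨X, Y, hC, hnc⟩ := exists_conf G c hn hm x y hG hgp hns1 hns2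
  rcases hnc with h | h
  · exact hC.core h v l hl hrange
  · refine hC.rev.core ?_ v l hl hrange
    obtain ⟨p, q, hp, hq, h1, h2⟩ := h
    refine ⟨1 - p, 1 - q, ?_, ?_, ?_, ?_⟩
    · grind
    · grind
    · simpa using h1
    · simpa using h2
end

section
/- Let G_1 and G_2 be two vertex-disjoint 2-edge-colored graphs with Hamiltonian alternating cycles C_1 = x_0 x_1 ⋯ x_{2n−1} x_0 and C_2 = y_0 y_1 ⋯ y_{2m−1} y_0 respectively, and let G ∈ G_1 ⊕ G_2. If there is no good pair in G, and for each i ∈ {1,2} there is a vertex of C_i that is non-singular with respect to C_{3−i}, then for each vertex v ∈ V(G) and each even integer l ∈ [4m_1, 2M_2], where m_1 = min{n, m} and M_2 = max{n, m}, there is an alternating cycle of length l in G passing through v. -/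
lemma alt_par (f : ℤ → Bool) (hf : ∀ i, f (i + 1) = !f i) (i : ℤ) :
    f i = if i % 2 = 1 then !f 0 else f 0 := by
  induction i using Int.induction_on with
  | zero => simp
  | succ k ih =>
    rw [hf, ih]
    split_ifs <;> first | omega | simp
  | pred k ih =>
    have h1 := hf (-(k : ℤ) - 1)
    rw [sub_add_cancel, ih] at h1
    have h2 : f (-(k : ℤ) - 1) = !(!f (-(k : ℤ) - 1)) := by simp
    rw [h2, ← h1]
    split_ifs <;> first | omega | simp

lemma alt_two (f g : ℤ → Bool) (hf : ∀ i, f (i + 1) = !f i) (hg : ∀ i, g (i + 1) = !g i)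
    {i j i' j' : ℤ} (h : f i = g j) (he : Even ((i - i') - (j - j'))) : f i' = g j' := by
  rw [alt_par f hf i, alt_par g hg j] at h
  rw [alt_par f hf i', alt_par g hg j']
  rw [Int.even_iff] at he
  split_ifs at h ⊢ <;> first | omega | simp_all

lemma alt_one (f : ℤ → Bool) (hf : ∀ i, f (i + 1) = !f i)
    {i j : ℤ} (h : f i = f j) : Even (i - j) := by
  rw [alt_par f hf i, alt_par f hf j] at h
  rw [Int.even_iff]
  split_ifs at h <;> first | omega | simp_all

lemma mk_cycle_s9 {V : Type*} (G : SimpleGraph V) (c : Sym2 V → Bool) (l : ℕ) (hl : 2 ≤ l)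
    (hle : Even l) (w : ℕ → V) (f : ℤ → Bool) (hf : ∀ i, f (i + 1) = !f i)
    (hinj : ∀ s t, s < l → t < l → w s = w t → s = t)
    (hadj : ∀ t, t < l → G.Adj (w t) (w ((t + 1) % l)))
    (hcol : ∀ t, t < l → c s(w t, w ((t + 1) % l)) = f t) :
    IsAltCycle G c (fun i : ZMod l => w i.val) := by
  have : Fact (1 < l) := ⟨hl⟩
  have : NeZero l := ⟨by omega⟩
  have hv : ∀ i : ZMod l, (i + 1).val = (i.val + 1) % l := fun i => by
    rw [ZMod.val_add, ZMod.val_one]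
  refine ⟨fun i j h => ZMod.val_injective l (hinj _ _ (ZMod.val_lt i) (ZMod.val_lt j) h), ?_, ?_⟩
  · intro i
    simp only [hv]
    exact hadj _ (ZMod.val_lt i)
  · intro i
    have e : i + 2 = (i + 1) + 1 := by ring
    have h1 := hcol _ (ZMod.val_lt i)
    have h2 := hcol _ (ZMod.val_lt (i + 1))
    rw [← hv] at h1 h2
    simp only [e, h1, h2]
    have h3 : f ((i + 1).val : ℤ) = !f (i.val : ℤ) := by
      rw [← hf]
      refine alt_two f f hf hf rfl (i := 0) (j := 0) ?_
      rw [hv]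
      have := ZMod.val_lt i
      by_cases hlt : i.val + 1 < l
      · rw [Nat.mod_eq_of_lt hlt]; simp
      · have : i.val + 1 = l := by omega
        have h5 : ((i.val : ℤ) + 1) = l := by exact_mod_cast this
        rw [this, h5]; simpa using hle
    rw [h3]; cases f (i.val : ℤ) <;> simp

/-- Integer-indexed version of the situation. -/
structure Setup {V : Type*} (G : SimpleGraph V) (c : Sym2 V → Bool) (n m : ℕ)
    (X Y : ℤ → V) : Prop where
  hn : 0 < n
  hm : 0 < m
  X_iff : ∀ i j, X i = X j ↔ (2 * n : ℤ) ∣ i - j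
  Y_iff : ∀ i j, Y i = Y j ↔ (2 * m : ℤ) ∣ i - j
  XY : ∀ i j, X i ≠ Y j
  adjX : ∀ i, G.Adj (X i) (X (i + 1))
  adjY : ∀ i, G.Adj (Y i) (Y (i + 1))
  adj : ∀ i j, G.Adj (X i) (Y j)
  altX : ∀ i, c s(X (i + 1), X (i + 1 + 1)) = !c s(X i, X (i + 1))
  altY : ∀ i, c s(Y (i + 1), Y (i + 1 + 1)) = !c s(Y i, Y (i + 1))
  ng : ∀ i j, c s(X i, X (i + 1)) = c s(Y j, Y (j + 1)) →
    c s(X i, Y j) = c s(X i, X (i + 1)) → c s(X (i + 1), Y (j + 1)) ≠ c s(X i, X (i + 1))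
  ng' : ∀ i j, c s(X i, X (i + 1)) = c s(Y j, Y (j + 1)) →
    c s(X i, Y (j + 1)) = c s(X i, X (i + 1)) → c s(X (i + 1), Y j) ≠ c s(X i, X (i + 1))

namespace Setup

variable {V : Type*} {G : SimpleGraph V} {c : Sym2 V → Bool} {n m : ℕ} {X Y : ℤ → V}

lemma diag_nat (S : Setup G c n m X Y) {i j : ℤ} (hal : c s(X i, X (i + 1)) = c s(Y j, Y (j + 1)))
    (hT : c s(X i, Y j) = c s(X i, X (i + 1))) (k : ℕ) :
    c s(X (i + k), Y (j + k)) = c s(X (i + k), X (i + k + 1)) := by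
  induction k with
  | zero => simpa using hT
  | succ k ih =>
    have hal' : c s(X (i + k), X (i + k + 1)) = c s(Y (j + k), Y (j + k + 1)) :=
      alt_two (fun i => c s(X i, X (i + 1))) (fun i => c s(Y i, Y (i + 1))) S.altX S.altY hal
        (by simp)
    have h1 := S.ng _ _ hal' ih
    have h2 := S.altX (i + k)
    push_cast
    rw [← add_assoc, ← add_assoc, h2]
    revert h1
    cases c s(X (i + k), X (i + k + 1)) <;> simp

lemma diag (S : Setup G c n m X Y) {i j : ℤ} (hal : c s(X i, X (i + 1)) = c s(Y j, Y (j + 1)))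
    (hT : c s(X i, Y j) = c s(X i, X (i + 1))) (k : ℤ) :
    c s(X (i + k), Y (j + k)) = c s(X (i + k), X (i + k + 1)) := by
  have h := S.diag_nat hal hT (k + (2 * n) * (2 * m) * |k|).toNat
  have hn := S.hn
  have hm := S.hm
  have hpos : 0 ≤ k + (2 * n) * (2 * m) * |k| := by
    have h1 : (1 : ℤ) ≤ (2 * n) * (2 * m) := by
      have : (1 : ℤ) ≤ n := by exact_mod_cast hn
      have : (1 : ℤ) ≤ m := by exact_mod_cast hm
      nlinarith
    have h2 := neg_abs_le k
    have h3 := abs_nonneg k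
    nlinarith
  rw [Int.toNat_of_nonneg hpos] at h
  have e1 : ∀ r, X (i + (k + (2 * n) * (2 * m) * |k|) + r) = X (i + k + r) := fun r => by
    rw [S.X_iff]; exact ⟨(2 * m) * |k|, by ring⟩
  have e1' := e1 0
  simp only [add_zero] at e1'
  have e2 : Y (j + (k + (2 * n) * (2 * m) * |k|)) = Y (j + k) := by
    rw [S.Y_iff]; exact ⟨(2 * n) * |k|, by ring⟩
  rwa [e1, e1', e2] at h

lemma core (S : Setup G c n m X Y) {i0 j0 i1 j1 : ℤ}
    (hal0 : c s(X i0, X (i0 + 1)) = c s(Y j0, Y (j0 + 1)))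
    (hT0 : c s(X i0, Y j0) = c s(X i0, X (i0 + 1)))
    (hal1 : c s(X i1, X (i1 + 1)) = c s(Y j1, Y (j1 + 1)))
    (hT1 : c s(X i1, Y j1) ≠ c s(X i1, X (i1 + 1)))
    (l : ℕ) (hle : Even l) (hl : 4 * n ≤ l) (hlm : l ≤ 2 * m) :
    ∃ r : ℤ, ∀ a : ℤ, ∃ z : ZMod l → V, IsAltCycle G c z ∧
      X a ∈ Set.range z ∧ Y (a + r) ∈ Set.range z := by
  have hn := S.hn
  -- the two connecting edges
  have T0 : ∀ a k : ℤ, c s(X (a + k), Y (a + k + (j0 - i0))) = c s(X (a + k), X (a + k + 1)) := by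
    intro a k
    have := S.diag hal0 hT0 (a + k - i0)
    rwa [show i0 + (a + k - i0) = a + k by ring,
      show j0 + (a + k - i0) = a + k + (j0 - i0) by ring] at this
  have T1 : ∀ a u : ℤ, c s(X a, Y (a + (j1 - i1) - 2 * n * u)) ≠ c s(X a, X (a + 1)) := by
    intro a u h
    apply hT1
    have hal : c s(X a, X (a + 1)) =
        c s(Y (a + (j1 - i1) - 2 * n * u), Y (a + (j1 - i1) - 2 * n * u + 1)) :=
      alt_two (fun i => c s(X i, X (i + 1))) (fun i => c s(Y i, Y (i + 1))) S.altX S.altY hal1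
        ⟨-(n * u), by ring⟩
    have := S.diag hal h (i1 - a + 2 * n * u)
    rw [show a + (j1 - i1) - 2 * n * u + (i1 - a + 2 * n * u) = j1 by ring] at this
    have e1 : ∀ r, X (a + (i1 - a + 2 * n * u) + r) = X (i1 + r) := fun r => by
      rw [S.X_iff]; exact ⟨u, by ring⟩
    have e0 := e1 0
    simp only [add_zero] at e0
    rwa [e1, e0] at this
  have he : Even (j0 - i0 - (j1 - i1)) := by
    have h1 : c s(X i0, X (i0 + 1)) = c s(Y (j1 - i1 + i0), Y (j1 - i1 + i0 + 1)) :=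
      alt_two (fun i => c s(X i, X (i + 1))) (fun i => c s(Y i, Y (i + 1))) S.altX S.altY hal1
        ⟨0, by ring⟩
    have h2 := alt_one (fun i => c s(Y i, Y (i + 1))) S.altY (hal0.symm.trans h1)
    rwa [show j0 - (j1 - i1 + i0) = j0 - i0 - (j1 - i1) by ring] at h2
  obtain ⟨e, he⟩ := he
  obtain ⟨h, hh⟩ := hle
  -- number of edges of the path along `X`
  obtain ⟨k, u, hk, hku⟩ : ∃ (k : ℕ) (u : ℤ), k < n ∧ (k : ℤ) = h - 1 - e - n * u := by
    have hn' : (0 : ℤ) < n := by exact_mod_cast hn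
    refine ⟨((h - 1 - e : ℤ) % n).toNat, (h - 1 - e : ℤ) / n, ?_, ?_⟩
    · have := Int.emod_lt_of_pos (h - 1 - e : ℤ) hn'
      have := Int.emod_nonneg (h - 1 - e : ℤ) hn'.ne'
      omega
    · rw [Int.toNat_of_nonneg (Int.emod_nonneg _ hn'.ne'), Int.emod_def]
  refine ⟨k + (j0 - i0), fun a => ?_⟩
  set w : ℕ → V := fun t =>
    if t ≤ k then X (a + t) else Y (a + k + (j0 - i0) - (t - k - 1)) with hw
  have wX : ∀ t, t ≤ k → w t = X (a + t) := fun t ht => by simp [hw, ht]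
  have wY : ∀ t, k < t → w t = Y (a + k + (j0 - i0) - (t - k - 1)) := fun t ht => by
    simp [hw, not_le.mpr ht]
  have key : ∀ t, t < l → G.Adj (w t) (w ((t + 1) % l)) ∧
      c s(w t, w ((t + 1) % l)) = c s(X (a + t), X (a + t + 1)) := by
    intro t ht
    rcases lt_trichotomy t k with h1 | h1 | h1
    · rw [Nat.mod_eq_of_lt (by omega), wX t (by omega), wX (t + 1) (by omega)]
      push_cast
      rw [← add_assoc]
      exact ⟨S.adjX _, rfl⟩
    · rw [Nat.mod_eq_of_lt (by omega), wX t (by omega), wY (t + 1) (by omega)]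
      subst h1
      rw [show a + (t : ℤ) + (j0 - i0) - (((t + 1 : ℕ) : ℤ) - t - 1) = a + t + (j0 - i0) by
        push_cast; ring]
      exact ⟨S.adj _ _, T0 _ _⟩
    · by_cases h2 : t + 1 < l
      · rw [Nat.mod_eq_of_lt h2, wY t (by omega), wY (t + 1) (by omega)]
        have e1 : a + (k : ℤ) + (j0 - i0) - ((t : ℤ) - k - 1) =
          a + (k : ℤ) + (j0 - i0) - (((t + 1 : ℕ) : ℤ) - k - 1) + 1 := by push_cast; ring
        rw [e1, Sym2.eq_swap]
        refine ⟨(S.adjY _).symm, Eq.symm ?_⟩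
        refine alt_two (fun i => c s(X i, X (i + 1))) (fun i => c s(Y i, Y (i + 1)))
          S.altX S.altY hal0 ⟨k - t, ?_⟩
        push_cast; ring
      · have e1 : t + 1 = l := by omega
        rw [e1, Nat.mod_self, wY t (by omega), wX 0 (by omega)]
        have e2 : a + (k : ℤ) + (j0 - i0) - ((t : ℤ) - k - 1) =
            a + (j1 - i1) - 2 * n * u := by
          have : (t : ℤ) + 1 = h + h := by exact_mod_cast e1.trans hh
          linear_combination 2 * hku + he - this
        rw [e2, Sym2.eq_swap]
        simp only [Nat.cast_zero, add_zero]
        refine ⟨(S.adj _ _).symm, ?_⟩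
        have h3 := T1 a u
        have h4 : c s(X (a + 1), X (a + 1 + 1)) = c s(X (a + t), X (a + t + 1)) :=
          alt_two (fun i => c s(X i, X (i + 1))) (fun i => c s(X i, X (i + 1)))
            S.altX S.altX (i := 0) (j := 0) rfl
            ⟨h - 1, by
              have : (t : ℤ) + 1 = h + h := by exact_mod_cast e1.trans hh
              linear_combination this⟩
        rw [← h4, S.altX]
        revert h3
        cases c s(X a, X (a + 1)) <;> simp
  refine ⟨fun i => w i.val, mk_cycle_s9 G c l (by omega) ⟨h, hh⟩ w
    (fun t => c s(X (a + t), X (a + t + 1))) ?_ ?_ (fun t ht => (key t ht).1)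
    (fun t ht => (key t ht).2), ?_, ?_⟩
  · intro i
    have := S.altX (a + i)
    simpa only [add_assoc] using this
  · intro s t hs ht hst
    by_cases h1 : s ≤ k <;> by_cases h2 : t ≤ k
    · rw [wX s h1, wX t h2, S.X_iff] at hst
      have := Int.eq_zero_of_abs_lt_dvd hst (by rw [abs_lt]; constructor <;> omega)
      omega
    · rw [wX s h1, wY t (by omega)] at hst
      exact absurd hst (S.XY _ _)
    · rw [wY s (by omega), wX t h2] at hst
      exact absurd hst.symm (S.XY _ _)
    · rw [wY s (by omega), wY t (by omega), S.Y_iff] at hst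
      have := Int.eq_zero_of_abs_lt_dvd hst (by rw [abs_lt]; constructor <;> omega)
      omega
  · exact ⟨0, by simp [hw]⟩
  · refine ⟨((k + 1 : ℕ) : ZMod l), ?_⟩
    simp only [ZMod.val_natCast]
    rw [Nat.mod_eq_of_lt (by omega), wY _ (by omega)]
    congr 1
    push_cast; ring

/-- Reversing the second cycle. -/
lemma reverse (S : Setup G c n m X Y) : Setup G c n m X (fun j => Y (-j)) where
  hn := S.hn
  hm := S.hm
  X_iff := S.X_iff
  Y_iff i j := by
    rw [S.Y_iff, ← dvd_neg]
    congr! 1; ring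
  XY i j := S.XY i _
  adjX := S.adjX
  adjY i := by
    have := (S.adjY (-i - 1)).symm
    rwa [sub_add_cancel, show -i - 1 = -(i + 1) by ring] at this
  adj i j := S.adj _ _
  altX := S.altX
  altY i := by
    have := S.altY (-i - 1 - 1)
    rw [sub_add_cancel, sub_add_cancel, show -i - 1 = -(i + 1) by ring,
      show -(i + 1) - 1 = -(i + 1 + 1) by ring] at this
    rw [Sym2.eq_swap (a := Y (-i)), this, Bool.not_not, Sym2.eq_swap]
  ng i j h1 h2 := by
    have := S.ng' i (-j - 1)
    rw [sub_add_cancel, show -j - 1 = -(j + 1) by ring] at this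
    exact this (by rw [h1, Sym2.eq_swap]) h2
  ng' i j h1 h2 := by
    have := S.ng i (-j - 1)
    rw [sub_add_cancel, show -j - 1 = -(j + 1) by ring] at this
    exact this (by rw [h1, Sym2.eq_swap]) h2

lemma main (S : Setup G c n m X Y)
    (h1 : ∃ i j j', c s(X i, Y j) ≠ c s(X i, Y j'))
    (h2 : ∃ j i i', c s(X i, Y j) ≠ c s(X i', Y j))
    (l : ℕ) (hle : Even l) (hl : 4 * n ≤ l) (hlm : l ≤ 2 * m) :
    (∀ a, ∃ z : ZMod l → V, IsAltCycle G c z ∧ X a ∈ Set.range z) ∧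
    (∀ a, ∃ z : ZMod l → V, IsAltCycle G c z ∧ Y a ∈ Set.range z) := by
  by_cases hA : ∃ i0 j0 i1 j1, c s(X i0, X (i0 + 1)) = c s(Y j0, Y (j0 + 1)) ∧
    c s(X i0, Y j0) = c s(X i0, X (i0 + 1)) ∧
    c s(X i1, X (i1 + 1)) = c s(Y j1, Y (j1 + 1)) ∧
    c s(X i1, Y j1) ≠ c s(X i1, X (i1 + 1))
  · obtain ⟨i0, j0, i1, j1, a1, a2, a3, a4⟩ := hA
    obtain ⟨r, hr⟩ := S.core a1 a2 a3 a4 l hle hl hlm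
    refine ⟨fun a => ?_, fun a => ?_⟩
    · obtain ⟨z, hz, hz1, -⟩ := hr a
      exact ⟨z, hz, hz1⟩
    · obtain ⟨z, hz, -, hz1⟩ := hr (a - r)
      exact ⟨z, hz, by simpa using hz1⟩
  by_cases hB : ∃ i0 j0 i1 j1, c s(X i0, X (i0 + 1)) ≠ c s(Y j0, Y (j0 + 1)) ∧
    c s(X i0, Y j0) = c s(X i0, X (i0 + 1)) ∧
    c s(X i1, X (i1 + 1)) ≠ c s(Y j1, Y (j1 + 1)) ∧
    c s(X i1, Y j1) ≠ c s(X i1, X (i1 + 1))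
  · obtain ⟨i0, j0, i1, j1, a1, a2, a3, a4⟩ := hB
    have hr : ∀ i j, c s(X i, X (i + 1)) ≠ c s(Y j, Y (j + 1)) →
        c s(X i, X (i + 1)) = c s(Y (- -j), Y (-(-j + 1))) := by
      intro i j hij
      have := S.altY (j - 1)
      rw [sub_add_cancel] at this
      rw [neg_neg, show -(-j + 1) = j - 1 by ring, Sym2.eq_swap (a := Y j)]
      rw [this] at hij
      revert hij
      cases c s(X i, X (i + 1)) <;> simp
    obtain ⟨r, hr⟩ := S.reverse.core (j0 := -j0) (j1 := -j1) (hr _ _ a1) (by simpa using a2)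
      (hr _ _ a3) (by simpa using a4) l hle hl hlm
    refine ⟨fun a => ?_, fun a => ?_⟩
    · obtain ⟨z, hz, hz1, -⟩ := hr a
      exact ⟨z, hz, hz1⟩
    · obtain ⟨z, hz, -, hz1⟩ := hr (-a - r)
      exact ⟨z, hz, by simpa using hz1⟩
  exfalso
  push Not at hA hB
  obtain ⟨i, j, j', h1⟩ := h1
  obtain ⟨q, p, p', h2⟩ := h2
  have A := fun i j i' j' => hA i j i' j'
  by_cases hP : ∃ i j, c s(X i, X (i + 1)) = c s(Y j, Y (j + 1)) ∧
      c s(X i, Y j) = c s(X i, X (i + 1))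
  · obtain ⟨i0, j0, b1, b2⟩ := hP
    have hA' := fun i j => hA i0 j0 i j b1 b2
    by_cases hQ : ∃ i j, c s(X i, X (i + 1)) ≠ c s(Y j, Y (j + 1)) ∧
      c s(X i, Y j) = c s(X i, X (i + 1))
    · obtain ⟨i2, j2, b3, b4⟩ := hQ
      have hB' := fun i j => hB i2 j2 i j b3 b4
      have : ∀ j, c s(X i, Y j) = c s(X i, X (i + 1)) := fun j => by
        by_cases hh : c s(X i, X (i + 1)) = c s(Y j, Y (j + 1))
        · exact hA' _ _ hh
        · exact hB' _ _ hh
      exact h1 (by rw [this, this])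
    · push Not at hQ
      have : ∀ i, c s(X i, Y q) = c s(Y q, Y (q + 1)) := fun i => by
        by_cases hh : c s(X i, X (i + 1)) = c s(Y q, Y (q + 1))
        · rw [hA' _ _ hh, hh]
        · have := hQ _ _ hh
          revert this hh
          cases c s(X i, X (i + 1)) <;> cases c s(X i, Y q) <;> simp
      exact h2 (by rw [this, this])
  · push Not at hP
    by_cases hQ : ∃ i j, c s(X i, X (i + 1)) ≠ c s(Y j, Y (j + 1)) ∧
      c s(X i, Y j) = c s(X i, X (i + 1))
    · obtain ⟨i2, j2, b3, b4⟩ := hQ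
      have hB' := fun i j => hB i2 j2 i j b3 b4
      have : ∀ i, c s(X i, Y q) = !c s(Y q, Y (q + 1)) := fun i => by
        by_cases hh : c s(X i, X (i + 1)) = c s(Y q, Y (q + 1))
        · have := hP _ _ hh
          revert this hh
          cases c s(X i, X (i + 1)) <;> cases c s(X i, Y q) <;> simp
        · rw [hB' _ _ hh]
          revert hh
          cases c s(X i, X (i + 1)) <;> simp
      exact h2 (by rw [this, this])
    · push Not at hQ
      have : ∀ j, c s(X i, Y j) = !c s(X i, X (i + 1)) := fun j => by
        have : c s(X i, Y j) ≠ c s(X i, X (i + 1)) := by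
          by_cases hh : c s(X i, X (i + 1)) = c s(Y j, Y (j + 1))
          · exact hP _ _ hh
          · exact hQ _ _ hh
        revert this
        cases c s(X i, X (i + 1)) <;> simp
      exact h1 (by rw [this, this])

lemma swap (S : Setup G c n m X Y) : Setup G c m n Y X where
  hn := S.hm
  hm := S.hn
  X_iff := S.Y_iff
  Y_iff := S.X_iff
  XY i j := (S.XY j i).symm
  adjX := S.adjY
  adjY := S.adjX
  adj i j := (S.adj j i).symm
  altX := S.altY
  altY := S.altX
  ng i j h1 h2 := by
    rw [Sym2.eq_swap, h1]
    rw [Sym2.eq_swap, h1] at h2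
    exact S.ng j i h1.symm h2
  ng' i j h1 h2 h3 := by
    rw [Sym2.eq_swap, h1] at h2 h3
    exact S.ng' j i h1.symm h3 h2

end Setup

lemma setup_of {V : Type*} (G : SimpleGraph V) (c : Sym2 V → Bool)
    {n m : ℕ} (hn : 0 < n) (hm : 0 < m)
    (x : ZMod (2 * n) → V) (y : ZMod (2 * m) → V)
    (hG : IsCGSHam G c x y) (hgp : ¬ HasGoodPair G c x y) :
    Setup G c n m (fun i : ℤ => x i) (fun j : ℤ => y j) := by
  obtain ⟨⟨hx1, hx2, hx3⟩, ⟨hy1, hy2, hy3⟩, hd, -, hadj⟩ := hG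
  refine ⟨hn, hm, ?_, ?_, ?_, ?_, ?_, ?_, ?_, ?_, ?_, ?_⟩
  · intro i j
    rw [hx1.eq_iff, eq_comm, ZMod.intCast_eq_intCast_iff_dvd_sub]
    push_cast; rfl
  · intro i j
    rw [hy1.eq_iff, eq_comm, ZMod.intCast_eq_intCast_iff_dvd_sub]
    push_cast; rfl
  · intro i j h
    exact Set.disjoint_left.mp hd ⟨_, rfl⟩ ⟨_, h.symm⟩
  · intro i; push_cast; exact hx2 _
  · intro i; push_cast; exact hy2 _
  · intro i j; exact hadj _ _
  · intro i
    have := hx3 i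
    push_cast
    rw [add_assoc, one_add_one_eq_two]
    revert this
    cases c s(x i, x (i + 1)) <;> simp
  · intro i
    have := hy3 i
    push_cast
    rw [add_assoc, one_add_one_eq_two]
    revert this
    cases c s(y i, y (i + 1)) <;> simp
  · intro i j h1 h2 h3
    push_cast at h1 h2 h3
    refine hgp ⟨i, i + 1, j, j + 1, Or.inr rfl, Or.inr rfl, hadj _ _, hadj _ _, h2.symm,
      h3.trans h2.symm, ?_⟩
    rw [Sym2.eq_swap, h2, h1]
  · intro i j h1 h2 h3
    push_cast at h1 h2 h3
    refine hgp ⟨i, i + 1, j + 1, j, Or.inr rfl, Or.inl (by ring), hadj _ _, hadj _ _, h2.symm,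
      h3.trans h2.symm, ?_⟩
    rw [h2, h1]

/-- Let `G ∈ G₁ ⊕ G₂` where `G₁`, `G₂` have Hamiltonian alternating
cycles `C₁ = x` (length `2n`), `C₂ = y` (length `2m`). If `G` has no good pair and each
`Cᵢ` has a vertex that is non-singular with respect to `C_{3-i}`, then for each vertex
`v` of `G` and each even `l ∈ [4·min n m, 2·max n m]` there is an alternating cycle of
length `l` in `G` passing through `v`. -/
theorem alt_cycles_middle {V : Type*} (G : SimpleGraph V) (c : Sym2 V → Bool)
    {n m : ℕ} (hn : 0 < n) (hm : 0 < m)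
    (x : ZMod (2 * n) → V) (y : ZMod (2 * m) → V)
    (hG : IsCGSHam G c x y) (hgp : ¬ HasGoodPair G c x y)
    (hns1 : ∃ i, ¬ SingularX c x y i) (hns2 : ∃ j, ¬ SingularY c x y j) :
    ∀ v : V, ∀ l : ℕ, Even l → 4 * min n m ≤ l → l ≤ 2 * max n m →
      ∃ z : ZMod l → V, IsAltCycle G c z ∧ v ∈ Set.range z := by
  have S := setup_of G c hn hm x y hG hgp
  intro v l hle hl hlm
  have sx : ∀ i : ZMod (2 * n), ∃ a : ℤ, (a : ZMod (2 * n)) = i := ZMod.intCast_surjective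
  have sy : ∀ i : ZMod (2 * m), ∃ a : ℤ, (a : ZMod (2 * m)) = i := ZMod.intCast_surjective
  have h1 : ∃ (i j j' : ℤ), c s(x i, y j) ≠ c s(x i, y j') := by
    obtain ⟨i, hi⟩ := hns1
    obtain ⟨i, rfl⟩ := sx i
    by_contra! hcon
    refine hi ⟨⟨0, trivial⟩, fun j j' => ?_⟩
    obtain ⟨j, rfl⟩ := sy j
    obtain ⟨j', rfl⟩ := sy j'
    exact hcon _ _ _
  have h2 : ∃ (j i i' : ℤ), c s(x i, y j) ≠ c s(x i', y j) := by
    obtain ⟨i, hi⟩ := hns2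
    obtain ⟨i, rfl⟩ := sy i
    by_contra! hcon
    refine hi ⟨⟨0, trivial⟩, fun j j' => ?_⟩
    obtain ⟨j, rfl⟩ := sx j
    obtain ⟨j', rfl⟩ := sx j'
    exact hcon _ _ _
  have both : (∀ a : ℤ, ∃ z : ZMod l → V, IsAltCycle G c z ∧ x a ∈ Set.range z) ∧
      (∀ a : ℤ, ∃ z : ZMod l → V, IsAltCycle G c z ∧ y a ∈ Set.range z) := by
    rcases le_total n m with hnm | hnm
    · rw [min_eq_left hnm] at hl
      rw [max_eq_right hnm] at hlm
      exact S.main h1 h2 l hle hl hlm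
    · rw [min_eq_right hnm] at hl
      rw [max_eq_left hnm] at hlm
      refine (S.swap.main ?_ ?_ l hle hl hlm).symm
      · obtain ⟨j, i, i', h⟩ := h2
        exact ⟨j, i, i', by rwa [Sym2.eq_swap, Sym2.eq_swap (a := y j)]⟩
      · obtain ⟨j, i, i', h⟩ := h1
        exact ⟨j, i, i', by rwa [Sym2.eq_swap, Sym2.eq_swap (a := y i')]⟩
  rcases hG.2.2.2.1 v with ⟨i, rfl⟩ | ⟨i, rfl⟩
  · obtain ⟨a, rfl⟩ := sx i
    exact both.1 a
  · obtain ⟨a, rfl⟩ := sy i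
    exact both.2 a
end

section
/- Let G_1 and G_2 be two vertex-disjoint 2-edge-colored graphs with Hamiltonian alternating cycles C_1 = x_0 x_1 ⋯ x_{2n−1} x_0 and C_2 = y_0 y_1 ⋯ y_{2m−1} y_0 respectively, and let G ∈ G_1 ⊕ G_2. Suppose there is no good pair in G, and for each i ∈ {1,2} there is a vertex of C_i that is non-singular with respect to C_{3−i}. Let d = gcd(n, m) and M_2 = max{n, m}. Then for each vertex w ∈ V(G) and each even integer l ∈ [2 + 2d, 2M_2], there is an alternating cycle of length l in G passing through w. -/
/-- Integer-indexed version of the configuration, with the two cycles aligned in color. -/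
structure AltCfg {V : Type*} (G : SimpleGraph V) (c : Sym2 V → Bool) (n m : ℕ)
    (X Y : ℤ → V) (al : ℤ → Bool) : Prop where
  hn : 0 < n
  hm : 0 < m
  xinj : ∀ i j, X i = X j ↔ (2 * n : ℤ) ∣ i - j
  yinj : ∀ i j, Y i = Y j ↔ (2 * m : ℤ) ∣ i - j
  xy : ∀ i j, X i ≠ Y j
  cover : ∀ v, (∃ i, X i = v) ∨ ∃ j, Y j = v
  xadj : ∀ i, G.Adj (X i) (X (i + 1))
  yadj : ∀ i, G.Adj (Y i) (Y (i + 1))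
  xyadj : ∀ i j, G.Adj (X i) (Y j)
  alt : ∀ i, al (i + 1) = !al i
  xcol : ∀ i, c s(X i, X (i + 1)) = al i
  ycol : ∀ i, c s(Y i, Y (i + 1)) = al i
  g1 : ∀ i j, (i - j) % 2 = 0 → ¬ (c s(X i, Y j) = al i ∧ c s(X (i + 1), Y (j + 1)) = al i)
  g2 : ∀ i j, (i - j) % 2 = 0 → ¬ (c s(X (i + 1), Y j) = al i ∧ c s(X i, Y (j + 1)) = al i)

theorem alt_form {al : ℤ → Bool} (h : ∀ i, al (i + 1) = !al i) (i : ℤ) :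
    al i = if i % 2 = 0 then al 0 else !al 0 := by
  induction i using Int.induction_on with
  | zero => simp
  | succ k ih =>
    rw [h, ih]
    by_cases hk : (k : ℤ) % 2 = 0
    · rw [if_pos hk, if_neg (by omega)]
    · rw [if_neg hk, if_pos (by omega)]; simp
  | pred k ih =>
    have h1 := h (-(k : ℤ) - 1)
    rw [sub_add_cancel, ih] at h1
    by_cases hk : (-(k : ℤ)) % 2 = 0
    · rw [if_pos hk] at h1; rw [if_neg (by omega), h1]; simp
    · rw [if_neg hk] at h1; rw [if_pos (by omega)]; simpa using h1.symm

theorem alt_even {al : ℤ → Bool} (h : ∀ i, al (i + 1) = !al i) {i j : ℤ}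
    (hij : (i - j) % 2 = 0) : al i = al j := by
  rw [alt_form h i, alt_form h j]
  by_cases hk : i % 2 = 0
  · rw [if_pos hk, if_pos (by omega)]
  · rw [if_neg hk, if_neg (by omega)]

theorem alt_odd {al : ℤ → Bool} (h : ∀ i, al (i + 1) = !al i) {i j : ℤ}
    (hij : (i - j) % 2 = 1) : al i = !al j := by
  rw [← h j]; exact alt_even h (by omega)

/-- Assemble an alternating cycle from a sequence. -/
theorem altCycle_of_seq {V : Type*} (G : SimpleGraph V) (c : Sym2 V → Bool) (l : ℕ)
    (hl : 2 ≤ l) (hle : l % 2 = 0) (W : ℕ → V) (ga : ℤ → Bool) (hga : ∀ i, ga (i + 1) = !ga i)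
    (hinj : ∀ i j, i < l → j < l → W i = W j → i = j)
    (hadj : ∀ i, i + 1 < l → G.Adj (W i) (W (i + 1)) ∧ c s(W i, W (i + 1)) = ga i)
    (hlast : G.Adj (W (l - 1)) (W 0) ∧ c s(W (l - 1), W 0) = ga ((l : ℤ) - 1)) :
    ∃ z : ZMod l → V, IsAltCycle G c z ∧ ∀ i, i < l → W i ∈ Set.range z := by
  have : NeZero l := ⟨by omega⟩
  have : Fact (1 < l) := ⟨by omega⟩
  have hval : ∀ i : ZMod l, (i + 1).val = if i.val + 1 < l then i.val + 1 else 0 := by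
    intro i
    have hi := ZMod.val_lt i
    rw [ZMod.val_add, ZMod.val_one]
    split_ifs with h
    · exact Nat.mod_eq_of_lt h
    · have : i.val + 1 = l := by omega
      rw [this, Nat.mod_self]
  have key : ∀ i : ZMod l, G.Adj (W i.val) (W (i + 1).val) ∧
      c s(W i.val, W (i + 1).val) = ga (i.val) := by
    intro i
    have hi := ZMod.val_lt i
    rw [hval]
    split_ifs with h
    · exact hadj _ h
    · have h2 : i.val = l - 1 := by omega
      rw [h2]
      have : ((l - 1 : ℕ) : ℤ) = (l : ℤ) - 1 := by omega
      rw [this]; exact hlast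
  refine ⟨fun i => W i.val, ⟨?_, fun i => (key i).1, ?_⟩, ?_⟩
  · intro i j hij
    exact ZMod.val_injective l (hinj _ _ (ZMod.val_lt i) (ZMod.val_lt j) hij)
  · intro i
    have h1 := (key i).2
    have h2 := (key (i + 1)).2
    have e : i + 1 + 1 = i + 2 := by ring
    rw [e] at h2
    show c s(W i.val, W (i + 1).val) ≠ c s(W (i + 1).val, W (i + 2).val)
    rw [h1, h2]
    have hi := ZMod.val_lt i
    have hv := hval i
    have : ga ((i + 1).val) = !ga (i.val) := by
      apply alt_odd hga
      rw [hv]; split_ifs <;> push_cast <;> omega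
    rw [this]; cases ga (i.val) <;> simp
  · intro i hi
    exact ⟨(i : ZMod l), by simp [ZMod.val_natCast, Nat.mod_eq_of_lt hi]⟩

namespace AltCfg

variable {V : Type*} {G : SimpleGraph V} {c : Sym2 V → Bool} {n m : ℕ}
    {X Y : ℤ → V} {al : ℤ → Bool}

theorem xper (h : AltCfg G c n m X Y al) (i u : ℤ) : X (i + 2 * n * u) = X i :=
  (h.xinj _ _).2 ⟨u, by ring⟩

theorem yper (h : AltCfg G c n m X Y al) (i u : ℤ) : Y (i + 2 * m * u) = Y i :=
  (h.yinj _ _).2 ⟨u, by ring⟩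

theorem diagNat (h : AltCfg G c n m X Y al) (i j : ℤ) (hij : (i - j) % 2 = 0)
    (hf : c s(X i, Y j) = al i) (t : ℕ) : c s(X (i + t), Y (j + t)) = al (i + t) := by
  induction t with
  | zero => simpa using hf
  | succ t ih =>
    have h1 := h.g1 (i + t) (j + t) (by omega)
    push_cast
    rw [← add_assoc, ← add_assoc, h.alt]
    have h2 : ¬ _ := fun h2 => h1 ⟨ih, h2⟩
    revert h2
    cases c s(X (i + t + 1), Y (j + t + 1)) <;> cases al (i + t) <;> simp

theorem diagInt (h : AltCfg G c n m X Y al) (i j : ℤ) (hij : (i - j) % 2 = 0)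
    (hf : c s(X i, Y j) = al i) (t : ℤ) : c s(X (i + t), Y (j + t)) = al (i + t) := by
  have hn := h.hn
  have hm := h.hm
  obtain ⟨s, hs⟩ : ∃ s : ℕ, (s : ℤ) = t + 2 * n * m * |t| := by
    refine ⟨(t + 2 * n * m * |t|).toNat, Int.toNat_of_nonneg ?_⟩
    have h1 : (1 : ℤ) ≤ n * m := by exact_mod_cast Nat.mul_pos hn hm
    have h2 := abs_nonneg t
    have h3 := neg_abs_le t
    nlinarith
  have h1 := h.diagNat i j hij hf s
  rw [hs] at h1
  have e1 : i + (t + 2 * n * m * |t|) = (i + t) + 2 * n * (m * |t|) := by ring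
  have e2 : j + (t + 2 * n * m * |t|) = (j + t) + 2 * m * (n * |t|) := by ring
  have e3 : al (i + (t + 2 * n * m * |t|)) = al (i + t) := by
    apply alt_even h.alt
    have : i + (t + 2 * n * m * |t|) - (i + t) = 2 * (n * m * |t|) := by ring
    omega
  rw [e3, e1, e2, h.xper, h.yper] at h1
  exact h1

theorem diag (h : AltCfg G c n m X Y al) (i j i' j' : ℤ) (hij : (i - j) % 2 = 0)
    (hd : (2 * (Nat.gcd n m) : ℤ) ∣ (i' - j') - (i - j))
    (hf : c s(X i, Y j) = al i) : c s(X i', Y j') = al i' := by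
  obtain ⟨k, hk⟩ := hd
  have hb := Nat.gcd_eq_gcd_ab n m
  set A := Nat.gcdA n m
  set B := Nat.gcdB n m
  have h1 := h.diagInt i j hij hf (i' - 2 * n * (A * k) - i)
  have e1 : i + (i' - 2 * n * (A * k) - i) = i' + 2 * n * (- (A * k)) := by ring
  have e2 : j + (i' - 2 * n * (A * k) - i) = j' + 2 * m * (B * k) := by
    rw [hb] at hk; linear_combination hk
  have e3 : al (i + (i' - 2 * n * (A * k) - i)) = al i' := by
    apply alt_even h.alt
    have : i + (i' - 2 * n * (A * k) - i) - i' = 2 * (- (n * A * k)) := by ring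
    omega
  rw [e3, e1, e2, h.xper, h.yper] at h1
  exact h1

/-- The basic cycle. -/
theorem cycle (h : AltCfg G c n m X Y al) (p q : ℕ) (hp : p < 2 * n) (hq : q < 2 * m)
    (hpq : (p + q) % 2 = 0) (a e : ℤ) (hae : (a - e) % 2 = 0)
    (hT : c s(X (a + p), Y (e + q)) = al (a + p)) (hF : c s(X a, Y e) ≠ al a) :
    ∃ z : ZMod (p + q + 2) → V, IsAltCycle G c z ∧ X a ∈ Set.range z ∧ Y e ∈ Set.range z := by
  set W : ℕ → V := fun i => if i ≤ p then X (a + i) else Y (e + q + p + 1 - i) with hW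
  have W1 : ∀ i, i ≤ p → W i = X (a + i) := fun i hi => by simp [hW, hi]
  have W2 : ∀ i, p < i → W i = Y (e + q + p + 1 - i) := fun i hi => by
    simp [hW, not_le.2 hi]
  have hWl : W (p + q + 2 - 1) = Y e := by
    rw [W2 _ (by omega)]; congr 1; push_cast [show p + q + 2 - 1 = p + q + 1 by omega]; ring
  have hW0 : W 0 = X a := by rw [W1 _ (by omega)]; simp
  have hga : ∀ i, (fun i : ℤ => al (a + i)) (i + 1) = !(fun i : ℤ => al (a + i)) i := by
    intro i; show al (a + (i + 1)) = _; rw [← add_assoc, h.alt]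
  suffices hex : ∃ z : ZMod (p + q + 2) → V, IsAltCycle G c z ∧
      ∀ i, i < p + q + 2 → W i ∈ Set.range z by
    obtain ⟨z, hz, hr⟩ := hex
    refine ⟨z, hz, ?_, ?_⟩
    · rw [← hW0]; exact hr _ (by omega)
    · rw [← hWl]; exact hr _ (by omega)
  refine altCycle_of_seq G c (p + q + 2) (by omega) (by omega) W
    (fun i => al (a + i)) hga ?_ ?_ ?_
  · have small : ∀ (N : ℕ) (t : ℤ), (2 * N : ℤ) ∣ t → |t| < 2 * N → t = 0 :=
      fun N t h1 h2 => Int.eq_zero_of_abs_lt_dvd h1 h2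
    intro i j hi hj hij
    rcases le_or_gt i p with hip | hip <;> rcases le_or_gt j p with hjp | hjp
    · rw [W1 _ hip, W1 _ hjp, h.xinj] at hij
      have := small n _ hij (by rw [abs_lt]; omega)
      omega
    · rw [W1 _ hip, W2 _ hjp] at hij
      exact absurd hij (h.xy _ _)
    · rw [W2 _ hip, W1 _ hjp] at hij
      exact absurd hij.symm (h.xy _ _)
    · rw [W2 _ hip, W2 _ hjp, h.yinj] at hij
      have := small m _ hij (by rw [abs_lt]; omega)
      omega
  · intro i hi
    rcases lt_trichotomy i p with hip | hip | hip
    · rw [W1 _ hip.le, W1 (i + 1) hip]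
      push_cast
      rw [← add_assoc]
      exact ⟨h.xadj _, h.xcol _⟩
    · subst hip
      rw [W1 _ le_rfl, W2 (i + 1) (by omega)]
      have : e + q + i + 1 - ((i + 1 : ℕ) : ℤ) = e + q := by push_cast; ring
      rw [this]
      exact ⟨h.xyadj _ _, hT⟩
    · rw [W2 _ hip, W2 (i + 1) (by omega)]
      have : e + q + p + 1 - (i : ℤ) = (e + q + p + 1 - ((i + 1 : ℕ) : ℤ)) + 1 := by
        push_cast; ring
      rw [this, Sym2.eq_swap]
      refine ⟨(h.yadj _).symm, ?_⟩
      rw [h.ycol]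
      apply alt_even h.alt
      push_cast; omega
  · rw [hWl, hW0, Sym2.eq_swap]
    refine ⟨(h.xyadj _ _).symm, ?_⟩
    have : al (a + (((p + q + 2 : ℕ) : ℤ) - 1)) = !al a := by
      apply alt_odd h.alt; push_cast; omega
    show _ = al (a + (((p + q + 2 : ℕ) : ℤ) - 1))
    rw [this]
    revert hF
    cases c s(X a, Y e) <;> cases al a <;> simp

/-- Main construction, when the diagonal class is not constant. -/
theorem main (h : AltCfg G c n m X Y al) (i j i' j' : ℤ) (hij : (i - j) % 2 = 0)
    (hij' : (i' - j') % 2 = 0) (hT : c s(X i, Y j) = al i) (hF : c s(X i', Y j') ≠ al i')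
    (w : V) (l : ℕ) (hl : l % 2 = 0) (hl1 : 2 + 2 * Nat.gcd n m ≤ l) (hl2 : l ≤ 2 * max n m) :
    ∃ z : ZMod l → V, IsAltCycle G c z ∧ w ∈ Set.range z := by
  have hn := h.hn
  have hm := h.hm
  have hd0 : 0 < Nat.gcd n m := Nat.gcd_pos_of_pos_left _ hn
  have hdn : Nat.gcd n m ≤ n := Nat.gcd_le_left _ hn
  have hdm : Nat.gcd n m ≤ m := Nat.gcd_le_right _ hm
  have hdiag := h.diag
  set d := Nat.gcd n m
  -- find an adjacent pair of classes
  obtain ⟨b, hb, hbT, hbF⟩ : ∃ b : ℤ, (i - b) % 2 = 0 ∧ c s(X i, Y b) = al i ∧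
      c s(X i, Y (b + 2)) ≠ al i := by
    by_contra hcon
    push Not at hcon
    have step : ∀ t : ℕ, c s(X i, Y (j + 2 * t)) = al i := by
      intro t
      induction t with
      | zero => simpa using hT
      | succ t ih =>
        have := hcon (j + 2 * t) (by omega) ih
        push_cast
        rw [show j + 2 * ((t : ℤ) + 1) = j + 2 * t + 2 by ring]; exact this
    apply hF
    obtain ⟨s, hs⟩ : ∃ s : ℤ, 2 * s = (i - j) - (i' - j') := ⟨((i - j) - (i' - j')) / 2, by omega⟩
    have h0 : 0 ≤ s + d * |s| := by
      have h1 : (1 : ℤ) ≤ d := by exact_mod_cast hd0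
      have h2 := abs_nonneg s
      have h3 := neg_abs_le s
      nlinarith
    have h1 := step (s + d * |s|).toNat
    rw [Int.toNat_of_nonneg h0] at h1
    refine hdiag _ _ _ _ ?_ ?_ h1
    · have : i - (j + 2 * (s + d * |s|)) = (i - j) + 2 * (-(s + d * |s|)) := by ring
      omega
    · exact ⟨|s|, by linear_combination hs⟩
  -- the cycles
  have build : ∀ p q : ℕ, p < 2 * n → q < 2 * m → p + q + 2 = l →
      (2 * d : ℤ) ∣ p - q - 2 → ∃ z : ZMod l → V, IsAltCycle G c z ∧ w ∈ Set.range z := by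
    intro p q hp hq hpq hdv
    have gen : ∀ a e : ℤ, a - e = i - (b + 2) →
        ∃ z : ZMod l → V, IsAltCycle G c z ∧ X a ∈ Set.range z ∧ Y e ∈ Set.range z := by
      intro a e hae
      subst hpq
      apply h.cycle p q hp hq (by omega) a e (by omega)
      · refine hdiag i b _ _ hb ?_ hbT
        have : a + p - (e + q) - (i - b) = p - q - 2 := by linear_combination hae
        rw [this]; exact hdv
      · intro hc
        apply hbF
        refine hdiag a e _ _ (by omega) ?_ hc
        rw [hae, sub_self]; exact dvd_zero _
    rcases h.cover w with ⟨a, rfl⟩ | ⟨e, rfl⟩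
    · obtain ⟨z, hz, h1, _⟩ := gen a (a - (i - (b + 2))) (by ring)
      exact ⟨z, hz, h1⟩
    · obtain ⟨z, hz, _, h1⟩ := gen (e + (i - (b + 2))) e (by ring)
      exact ⟨z, hz, h1⟩
  obtain ⟨r, rfl⟩ : ∃ r, l = 2 * (r + 2) := ⟨l / 2 - 2, by omega⟩
  rcases le_total m n with hmn | hmn
  · rw [max_eq_left hmn] at hl2
    have hq := Nat.mod_lt r hd0
    have hq2 := Nat.mod_add_div r d
    have hq3 : r % d ≤ r := Nat.mod_le _ _
    refine build (2 * r + 2 - r % d) (r % d) (by omega) (by omega) (by omega) ?_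
    refine ⟨(r / d : ℕ), ?_⟩
    rw [Nat.cast_sub (by omega)]
    have : (r : ℤ) = (r % d : ℕ) + d * (r / d : ℕ) := by exact_mod_cast hq2.symm
    push_cast at this ⊢
    linear_combination 2 * this
  · rw [max_eq_right hmn] at hl2
    have hq := Nat.mod_lt (r + 2) hd0
    have hq2 := Nat.mod_add_div (r + 2) d
    have hq4 : (r + 2) % d ≤ r + 2 := Nat.mod_le _ _
    refine build ((r + 2) % d) (2 * r + 2 - (r + 2) % d) (by omega) (by omega) (by omega) ?_
    refine ⟨-((r + 2) / d : ℕ), ?_⟩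
    rw [Nat.cast_sub (by omega)]
    have : ((r : ℤ) + 2) = ((r + 2) % d : ℕ) + d * ((r + 2) / d : ℕ) := by
      exact_mod_cast hq2.symm
    push_cast at this ⊢
    linear_combination (-2) * this

/-- Reflecting the second cycle. -/
theorem reflect (h : AltCfg G c n m X Y al) : AltCfg G c n m X (fun j => Y (1 - j)) al where
  hn := h.hn
  hm := h.hm
  xinj := h.xinj
  yinj i j := by
    rw [h.yinj, ← dvd_neg, show -(1 - i - (1 - j)) = i - j by ring]
  xy i j := h.xy _ _
  cover v := by
    rcases h.cover v with h1 | ⟨j, h1⟩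
    · exact Or.inl h1
    · exact Or.inr ⟨1 - j, by simpa using h1⟩
  xadj := h.xadj
  yadj i := by
    have := (h.yadj (-i)).symm
    rw [show -i + 1 = 1 - i by ring] at this
    show G.Adj (Y (1 - i)) (Y (1 - (i + 1)))
    rw [show 1 - (i + 1) = -i by ring]
    exact this
  xyadj i j := h.xyadj _ _
  alt := h.alt
  xcol := h.xcol
  ycol i := by
    have := h.ycol (-i)
    rw [show -i + 1 = 1 - i by ring, Sym2.eq_swap] at this
    show c s(Y (1 - i), Y (1 - (i + 1))) = _
    rw [show 1 - (i + 1) = -i by ring, this]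
    exact alt_even h.alt (by omega)
  g1 i j hij := by
    have := h.g2 i (-j) (by omega)
    rw [show -j + 1 = 1 - j by ring] at this
    rw [show 1 - (j + 1) = -j by ring]
    exact fun hh => this ⟨hh.2, hh.1⟩
  g2 i j hij := by
    have := h.g1 i (-j) (by omega)
    rw [show -j + 1 = 1 - j by ring] at this
    rw [show 1 - (j + 1) = -j by ring]
    exact fun hh => this ⟨hh.2, hh.1⟩

theorem final (h : AltCfg G c n m X Y al)
    (hx : ∃ i j j', c s(X i, Y j) ≠ c s(X i, Y j'))
    (hy : ∃ j i i', c s(X i, Y j) ≠ c s(X i', Y j))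
    (w : V) (l : ℕ) (hl : l % 2 = 0) (hl1 : 2 + 2 * Nat.gcd n m ≤ l) (hl2 : l ≤ 2 * max n m) :
    ∃ z : ZMod l → V, IsAltCycle G c z ∧ w ∈ Set.range z := by
  by_contra hcon
  have hD : ∀ i j i' j' : ℤ, (i - j) % 2 = 0 → (i' - j') % 2 = 0 →
      c s(X i, Y j) = al i → c s(X i', Y j') = al i' := by
    intro i j i' j' h1 h2 h3
    by_contra h4
    exact hcon (h.main i j i' j' h1 h2 h3 h4 w l hl hl1 hl2)
  have hA : ∀ i j i' j' : ℤ, (i - j) % 2 = 1 → (i' - j') % 2 = 1 →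
      c s(X i, Y j) = al i → c s(X i', Y j') = al i' := by
    intro i j i' j' h1 h2 h3
    by_contra h4
    refine hcon (h.reflect.main i (1 - j) i' (1 - j') (by omega) (by omega) ?_ ?_ w l hl hl1 hl2)
    · simpa using h3
    · simpa using h4
  obtain ⟨i, j, j', hx⟩ := hx
  obtain ⟨k, u, u', hy⟩ := hy
  have alt := h.alt
  have bx : ∀ p q r : Bool, p ≠ q → q ≠ r → p = r := by decide
  -- the two constants
  have cD : ∃ δ : Bool, ∀ i j : ℤ, (i - j) % 2 = 0 → c s(X i, Y j) = xor (al i) δ := by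
    by_cases hh : ∃ i j : ℤ, (i - j) % 2 = 0 ∧ c s(X i, Y j) = al i
    · obtain ⟨a, b, h1, h2⟩ := hh
      exact ⟨false, fun i j hij => by simpa using hD a b i j h1 hij h2⟩
    · push Not at hh
      refine ⟨true, fun i j hij => ?_⟩
      have := hh i j hij
      revert this
      cases c s(X i, Y j) <;> cases al i <;> simp
  have cA : ∃ δ : Bool, ∀ i j : ℤ, (i - j) % 2 = 1 → c s(X i, Y j) = xor (al i) δ := by
    by_cases hh : ∃ i j : ℤ, (i - j) % 2 = 1 ∧ c s(X i, Y j) = al i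
    · obtain ⟨a, b, h1, h2⟩ := hh
      exact ⟨false, fun i j hij => by simpa using hA a b i j h1 hij h2⟩
    · push Not at hh
      refine ⟨true, fun i j hij => ?_⟩
      have := hh i j hij
      revert this
      cases c s(X i, Y j) <;> cases al i <;> simp
  obtain ⟨δ, cD⟩ := cD
  obtain ⟨ε, cA⟩ := cA
  by_cases hde : δ = ε
  · subst hde
    have all : ∀ i j, c s(X i, Y j) = xor (al i) δ := fun i j => by
      rcases Int.emod_two_eq_zero_or_one (i - j) with h1 | h1
      · exact cD i j h1
      · exact cA i j h1
    exact hx (by rw [all, all])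
  · have all : ∀ i j, c s(X i, Y j) = xor (al j) δ := fun i j => by
      rcases Int.emod_two_eq_zero_or_one (i - j) with h1 | h1
      · rw [cD i j h1, alt_even alt h1]
      · rw [cA i j h1, alt_odd alt h1]
        revert hde
        cases δ <;> cases ε <;> cases al j <;> simp
    exact hy (by rw [all, all])

end AltCfg

/-- Let `G ∈ G₁ ⊕ G₂` where `G₁`, `G₂` have Hamiltonian alternating
cycles `C₁ = x` (length `2n`), `C₂ = y` (length `2m`). If `G` has no good pair and each
`Cᵢ` has a vertex that is non-singular with respect to `C_{3-i}`, then with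
`d = gcd n m` and `M₂ = max n m`, for each vertex `w` of `G` and each even
`l ∈ [2 + 2d, 2·M₂]` there is an alternating cycle of length `l` in `G` passing
through `w`. -/
theorem alt_cycles_gcd_range {V : Type*} (G : SimpleGraph V) (c : Sym2 V → Bool)
    {n m : ℕ} (hn : 0 < n) (hm : 0 < m)
    (x : ZMod (2 * n) → V) (y : ZMod (2 * m) → V)
    (hG : IsCGSHam G c x y) (hgp : ¬ HasGoodPair G c x y)
    (hns1 : ∃ i, ¬ SingularX c x y i) (hns2 : ∃ j, ¬ SingularY c x y j) :
    ∀ w : V, ∀ l : ℕ, Even l → 2 + 2 * Nat.gcd n m ≤ l → l ≤ 2 * max n m →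
      ∃ z : ZMod l → V, IsAltCycle G c z ∧ w ∈ Set.range z := by
  obtain ⟨hX, hY, hdisj, hcov, hxy⟩ := hG
  have dvdX : ∀ (N : ℕ) (i j : ℤ), ((i : ZMod (2 * N)) = (j : ZMod (2 * N))) ↔
      (2 * N : ℤ) ∣ i - j := by
    intro N i j
    rw [eq_comm, ZMod.intCast_eq_intCast_iff_dvd_sub]; push_cast; rfl
  have bb : ∀ p q : Bool, p ≠ q → q = !p := by decide
  have altX : ∀ i : ℤ, c s(x ((i + 1 : ℤ) : ZMod (2 * n)), x ((i + 1 + 1 : ℤ) : ZMod (2 * n))) =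
      !c s(x (i : ZMod (2 * n)), x ((i + 1 : ℤ) : ZMod (2 * n))) := by
    intro i
    have := hX.2.2 (i : ZMod (2 * n))
    have e : ((i + 1 + 1 : ℤ) : ZMod (2 * n)) = (i : ZMod (2 * n)) + 2 := by push_cast; ring
    rw [e]; push_cast
    exact bb _ _ this
  have altY : ∀ i : ℤ, c s(y ((i + 1 : ℤ) : ZMod (2 * m)), y ((i + 1 + 1 : ℤ) : ZMod (2 * m))) =
      !c s(y (i : ZMod (2 * m)), y ((i + 1 : ℤ) : ZMod (2 * m))) := by
    intro i
    have := hY.2.2 (i : ZMod (2 * m))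
    have e : ((i + 1 + 1 : ℤ) : ZMod (2 * m)) = (i : ZMod (2 * m)) + 2 := by push_cast; ring
    rw [e]; push_cast
    exact bb _ _ this
  set al : ℤ → Bool := fun i => c s(x (i : ZMod (2 * n)), x ((i + 1 : ℤ) : ZMod (2 * n))) with hal
  set be : ℤ → Bool := fun i => c s(y (i : ZMod (2 * m)), y ((i + 1 : ℤ) : ZMod (2 * m))) with hbe
  have altal : ∀ i, al (i + 1) = !al i := altX
  have altbe : ∀ i, be (i + 1) = !be i := altY
  obtain ⟨s, hs⟩ : ∃ s : ℤ, be s = al 0 := by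
    by_cases h0 : be 0 = al 0
    · exact ⟨0, h0⟩
    · refine ⟨0 + 1, ?_⟩
      rw [altbe]; exact (bb _ _ h0).symm
  have hbs : ∀ j, be (j + s) = al j := by
    intro j
    rcases Int.emod_two_eq_zero_or_one j with h1 | h1
    · rw [alt_even altbe (i := j + s) (j := s) (by omega), hs]
      exact alt_even altal (by omega)
    · rw [alt_odd altbe (i := j + s) (j := s) (by omega), hs]
      exact (alt_odd altal (by omega)).symm
  have ysucc : ∀ j : ℤ, y ((j + 1 + s : ℤ) : ZMod (2 * m)) = y ((j + s + 1 : ℤ) : ZMod (2 * m)) :=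
    fun j => by rw [show j + 1 + s = j + s + 1 by ring]
  have cfg : AltCfg G c n m (fun i : ℤ => x (i : ZMod (2 * n)))
      (fun j : ℤ => y ((j + s : ℤ) : ZMod (2 * m))) al := by
    refine ⟨hn, hm, ?_, ?_, ?_, ?_, ?_, ?_, ?_, altal, ?_, ?_, ?_, ?_⟩
    · intro i j
      show x _ = x _ ↔ _
      rw [hX.1.eq_iff, dvdX]
    · intro i j
      show y _ = y _ ↔ _
      rw [hY.1.eq_iff, dvdX, show i + s - (j + s) = i - j by ring]
    · intro i j hij
      exact Set.disjoint_left.1 hdisj ⟨_, rfl⟩ ⟨_, hij.symm⟩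
    · intro v
      rcases hcov v with ⟨i, rfl⟩ | ⟨j, rfl⟩
      · obtain ⟨k, rfl⟩ := ZMod.intCast_surjective i
        exact Or.inl ⟨k, rfl⟩
      · obtain ⟨k, rfl⟩ := ZMod.intCast_surjective j
        exact Or.inr ⟨k - s, by simp⟩
    · intro i
      have := hX.2.1 (i : ZMod (2 * n))
      simpa using this
    · intro i
      show G.Adj (y _) (y _)
      rw [ysucc]
      have := hY.2.1 ((i + s : ℤ) : ZMod (2 * m))
      simpa using this
    · intro i j
      exact hxy _ _
    · intro i; rfl
    · intro i
      show c s(y _, y _) = _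
      rw [ysucc]
      exact hbs i
    · intro i j hij hh
      apply hgp
      have hc : be (j + s) = al i := by rw [hbs]; exact (alt_even altal hij).symm
      simp only [hbe] at hc
      simp only [ysucc] at hh
      refine ⟨(i : ZMod (2 * n)), ((i + 1 : ℤ) : ZMod (2 * n)), ((j + s : ℤ) : ZMod (2 * m)),
        ((j + s + 1 : ℤ) : ZMod (2 * m)), Or.inr (by push_cast; ring), Or.inr (by push_cast; ring),
        hxy _ _, hxy _ _, hh.1.symm, hh.2.trans hh.1.symm, ?_⟩
      rw [Sym2.eq_swap, hc, hh.1]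
    · intro i j hij hh
      apply hgp
      have hc : be (j + s) = al i := by rw [hbs]; exact (alt_even altal hij).symm
      simp only [hbe] at hc
      simp only [ysucc] at hh
      refine ⟨(i : ZMod (2 * n)), ((i + 1 : ℤ) : ZMod (2 * n)), ((j + s + 1 : ℤ) : ZMod (2 * m)),
        ((j + s : ℤ) : ZMod (2 * m)), Or.inr (by push_cast; ring), Or.inl (by push_cast; ring),
        hxy _ _, hxy _ _, hh.2.symm, hh.1.trans hh.2.symm, ?_⟩
      rw [hc, hh.2]
  intro w l hle hl1 hl2
  refine cfg.final ?_ ?_ w l (Nat.even_iff.1 hle) hl1 hl2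
  · obtain ⟨i, hi⟩ := hns1
    have : ∃ j j', c s(x i, y j) ≠ c s(x i, y j') := by
      by_contra hcon
      push Not at hcon
      exact hi ⟨⟨0, trivial⟩, hcon⟩
    obtain ⟨j, j', hj⟩ := this
    obtain ⟨i, rfl⟩ := ZMod.intCast_surjective i
    obtain ⟨j, rfl⟩ := ZMod.intCast_surjective j
    obtain ⟨j', rfl⟩ := ZMod.intCast_surjective j'
    exact ⟨i, j - s, j' - s, by simpa using hj⟩
  · obtain ⟨j, hj⟩ := hns2
    have : ∃ i i', c s(x i, y j) ≠ c s(x i', y j) := by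
      by_contra hcon
      push Not at hcon
      exact hj ⟨⟨0, trivial⟩, hcon⟩
    obtain ⟨i, i', hi⟩ := this
    obtain ⟨j, rfl⟩ := ZMod.intCast_surjective j
    obtain ⟨i, rfl⟩ := ZMod.intCast_surjective i
    obtain ⟨i', rfl⟩ := ZMod.intCast_surjective i'
    exact ⟨j - s, i, i', by simpa using hi⟩
end
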